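/- Let d = 2, ν > κ > 0 and γ > 1. There exists δ̄ > 0, depending only on γ, ν and κ, with the following property: for every δ ∈ (0, δ̄), every sufficiently small ε > 0 (smaller than a threshold depending only on γ, ν, κ), every T > 0 and every smooth initial data (ρ⁰, u⁰) with ρ⁰ > 0, there is a constant C, depending only on ε, ν, κ, γ, δ, T and (ρ⁰, u⁰), such that every smooth solution (ρ, u) of (QNS_ε) on [0,T] × T² with initial data (ρ⁰, u⁰) satisfies sup_{t∈(0,T)} ∫_{T²} ρ |w|^{2+2δ} dx ≤ C, where w = u + μ ∇(φ_ε(ρ)). -/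

import Mathlib

open MeasureTheory Real

noncomputable section

/-- Partial derivative of a scalar field in the coordinate direction `i`. -/
def pd {d : ℕ} (i : Fin d) (f : (Fin d → ℝ) → ℝ) (x : Fin d → ℝ) : ℝ :=
  fderiv ℝ f x (Pi.single i 1)

/-- Gradient of a scalar field. -/
def grad {d : ℕ} (f : (Fin d → ℝ) → ℝ) (x : Fin d → ℝ) : Fin d → ℝ :=
  fun i => pd i f x

/-- Divergence of a vector field. -/
def dvg {d : ℕ} (u : (Fin d → ℝ) → (Fin d → ℝ)) (x : Fin d → ℝ) : ℝ :=
  ∑ i, pd i (fun y => u y i) x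

/-- Row-wise divergence of a matrix field: `(dvgM M x) i = ∑ j, ∂_j M_{ij}`. -/
def dvgM {d : ℕ} (M : (Fin d → ℝ) → Fin d → Fin d → ℝ) (x : Fin d → ℝ) : Fin d → ℝ :=
  fun i => ∑ j, pd j (fun y => M y i j) x

/-- Hessian of a scalar field. -/
def hess {d : ℕ} (f : (Fin d → ℝ) → ℝ) (x : Fin d → ℝ) : Fin d → Fin d → ℝ :=
  fun i j => pd i (fun y => pd j f y) x

/-- Laplacian of a scalar field. -/
def lap {d : ℕ} (f : (Fin d → ℝ) → ℝ) (x : Fin d → ℝ) : ℝ :=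
  ∑ i, pd i (fun y => pd i f y) x

/-- Jacobian matrix of a vector field: `(jac u x) i j = ∂_j u_i`. -/
def jac {d : ℕ} (u : (Fin d → ℝ) → (Fin d → ℝ)) (x : Fin d → ℝ) : Fin d → Fin d → ℝ :=
  fun i j => pd j (fun y => u y i) x

/-- Symmetric part of the gradient of a vector field, `Du = (∇u + (∇u)ᵀ)/2`. -/
def symD {d : ℕ} (u : (Fin d → ℝ) → (Fin d → ℝ)) (x : Fin d → ℝ) : Fin d → Fin d → ℝ :=
  fun i j => (jac u x i j + jac u x j i) / 2

/-- Antisymmetric part of the gradient of a vector field, `Au = (∇u − (∇u)ᵀ)/2`. -/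
def antiD {d : ℕ} (u : (Fin d → ℝ) → (Fin d → ℝ)) (x : Fin d → ℝ) : Fin d → Fin d → ℝ :=
  fun i j => (jac u x i j - jac u x j i) / 2

/-- Tensor product of two vectors: `(a ⊗ b)_{ij} = a_i b_j`. -/
def tens {d : ℕ} (a b : Fin d → ℝ) : Fin d → Fin d → ℝ := fun i j => a i * b j

/-- ℤ^d-periodicity: a function of this kind descends to the torus `T^d = ℝ^d/ℤ^d`. -/
def SpacePeriodic {d : ℕ} {E : Type*} (f : (Fin d → ℝ) → E) : Prop :=
  ∀ x : Fin d → ℝ, ∀ n : Fin d → ℤ, f (x + fun i => (n i : ℝ)) = f x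

/-- Fundamental domain of the torus `T^d = ℝ^d/ℤ^d` (with its probability Lebesgue measure). -/
def unitBox (d : ℕ) : Set (Fin d → ℝ) := Set.Icc 0 1

/-- The approximating viscosity coefficient `h_ε(r) = r + ε r^{7/8} + ε r^γ`. -/
def hfun (ε γ r : ℝ) : ℝ := r + ε * r ^ ((7 : ℝ) / 8) + ε * r ^ γ

/-- `g_ε(r) = r h_ε'(r) − h_ε(r)`. -/
def gfun (ε γ r : ℝ) : ℝ := r * deriv (hfun ε γ) r - hfun ε γ r

/-- `λ(ε) = e^{−1/ε⁴}`. -/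
def lamfun (ε : ℝ) : ℝ := Real.exp (-1 / ε ^ 4)

/-- The damping coefficient `p̃_ε(r) = λ(ε)(r^{1/ε²} + r^{−1/ε²})`. -/
def ptil (ε r : ℝ) : ℝ := lamfun ε * (r ^ (1 / ε ^ 2) + r ^ (-(1 / ε ^ 2)))

/-- `μ = ν − √(ν² − κ²)`. -/
def muof (ν κ : ℝ) : ℝ := ν - Real.sqrt (ν ^ 2 - κ ^ 2)

/-- `p_ε` is an antiderivative on `(0,∞)` of `r ↦ μ p̃_ε(r) h_ε'(r) / r`. -/
def IsPeps (ε γ ν κ : ℝ) (P : ℝ → ℝ) : Prop :=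
  ∀ r : ℝ, 0 < r → HasDerivAt P (muof ν κ * ptil ε r * deriv (hfun ε γ) r / r) r

/-- `φ_ε` is a smooth function on `(0,∞)` with `r φ_ε'(r) = h_ε'(r)`. -/
def IsPhieps (ε γ : ℝ) (Φ : ℝ → ℝ) : Prop :=
  ContDiffOn ℝ (⊤ : ℕ∞) Φ (Set.Ioi 0) ∧ ∀ r : ℝ, 0 < r → r * deriv Φ r = deriv (hfun ε γ) r

/-- `f_ε` satisfies `r f_ε'(r) − f_ε(r) = p_ε(r)` on `(0,∞)`. -/
def IsFeps (P F : ℝ → ℝ) : Prop :=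
  (∀ r : ℝ, 0 < r → DifferentiableAt ℝ F r) ∧
  ∀ r : ℝ, 0 < r → r * deriv F r - F r = P r

/-- The vector field `∇( h_ε'(ρ) div(h_ε'(ρ) ∇√ρ) / √ρ )`; the capillarity term of (QNS_ε) is
`2 κ² ρ` times this field. -/
def Kvec {d : ℕ} (ε γ : ℝ) (ρ : (Fin d → ℝ) → ℝ) (x : Fin d → ℝ) : Fin d → ℝ :=
  grad (fun y => deriv (hfun ε γ) (ρ y) *
      dvg (fun z => deriv (hfun ε γ) (ρ z) • grad (fun w => Real.sqrt (ρ w)) z) y /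
      Real.sqrt (ρ y)) x

/-- A smooth solution of the approximating system (QNS_ε) on `(0,T) × T^d`:
a pair of `C^∞` functions on `[0,T] × T^d` with `ρ > 0` everywhere, satisfying the continuity
equation and the momentum equation pointwise. -/
def IsQNSSol (d : ℕ) (ε γ ν κ T : ℝ) (P : ℝ → ℝ)
    (ρ : ℝ → (Fin d → ℝ) → ℝ) (u : ℝ → (Fin d → ℝ) → (Fin d → ℝ)) : Prop :=
  ContDiffOn ℝ (⊤ : ℕ∞) (fun p : ℝ × (Fin d → ℝ) => ρ p.1 p.2) (Set.Icc 0 T ×ˢ Set.univ) ∧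
  ContDiffOn ℝ (⊤ : ℕ∞) (fun p : ℝ × (Fin d → ℝ) => u p.1 p.2) (Set.Icc 0 T ×ˢ Set.univ) ∧
  (∀ t x, 0 < ρ t x) ∧
  (∀ t, SpacePeriodic (ρ t)) ∧
  (∀ t, SpacePeriodic (u t)) ∧
  (∀ t ∈ Set.Ioo 0 T, ∀ x : Fin d → ℝ,
    deriv (fun s => ρ s x) t + dvg (fun y => ρ t y • u t y) x = 0) ∧
  (∀ t ∈ Set.Ioo 0 T, ∀ x : Fin d → ℝ, ∀ i : Fin d,
    deriv (fun s => ρ s x * u s x i) t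
      + dvgM (fun y i' j => ρ t y * u t y i' * u t y j) x i
      + grad (fun y => ρ t y ^ γ + P (ρ t y)) x i
      + ptil ε (ρ t x) * u t x i
    = 2 * ν * dvgM (fun y i' j => hfun ε γ (ρ t y) * symD (u t) y i' j) x i
      + 2 * ν * grad (fun y => gfun ε γ (ρ t y) * dvg (u t) y) x i
      + 2 * κ ^ 2 * ρ t x * Kvec ε γ (ρ t) x i)

/-!
The effective velocity `w = u + μ ∇φ_ε(ρ)` turns (QNS_ε) into
`ρ (∂ₜ w + u · ∇w) + ∇(ρ^γ) + p̃_ε(ρ) w = div (ν S + (ν - μ) Sᵀ)`, `S = h_ε ∇w + g_ε (div w) I`: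
the capillarity is absorbed because `μ (2ν - μ) = κ²`, and `∇p_ε` because `∇p_ε = μ p̃_ε ∇φ_ε`.
Test this system with `(1 + |w|²)^δ w`. Since `g_ε ≥ -h_ε / 8`, the stress is coercive for `d < 8`
and remains so for small `δ`, and the work of the pressure `ρ^γ` is absorbed up to
`C (1 + |w|²)^δ ρ^{2γ} / h_ε ≤ C (1 + |w|²)^δ ρ^γ / ε`. The damping `p̃_ε |w|² ≥ λ(ε) ρ^γ |w|²`
controls this term unless `|w|` is bounded by a constant, so that only a multiple of `ρ^γ` is left.
Its integral is bounded by the energy estimate with `δ = 0`, in which the pressure is not absorbed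
but provides the potential energy `ρ^γ / (γ - 1)`, as `(w - u) · ∇ρ^γ ≥ 0`.
-/

open Set
open scoped ContDiff

section PartialDerivatives

variable {d : ℕ} {f g : (Fin d → ℝ) → ℝ} {x : Fin d → ℝ}

-- `ContDiff.differentiable` at `n = ∞`, without the side goal that `fun_prop` cannot discharge.
@[fun_prop]
lemma differentiableAt_of_contDiff_infty {E F : Type*} [NormedAddCommGroup E] [NormedSpace ℝ E]
    [NormedAddCommGroup F] [NormedSpace ℝ F] {u : E → F} {p : E} (hu : ContDiff ℝ ∞ u) :
    DifferentiableAt ℝ u p :=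
  hu.differentiable (by simp) p

@[fun_prop]
lemma contDiff_pd (hf : ContDiff ℝ ∞ f) (i : Fin d) : ContDiff ℝ ∞ (pd i f) :=
  (hf.fderiv_right (m := ∞) (by simp)).clm_apply contDiff_const

lemma pd_add (hf : DifferentiableAt ℝ f x) (hg : DifferentiableAt ℝ g x) (i : Fin d) :
    pd i (fun y => f y + g y) x = pd i f x + pd i g x := by
  simp only [pd, fderiv_fun_add hf hg, add_apply]

lemma pd_sub (hf : DifferentiableAt ℝ f x) (hg : DifferentiableAt ℝ g x) (i : Fin d) :
    pd i (fun y => f y - g y) x = pd i f x - pd i g x := by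
  simp only [pd, fderiv_fun_sub hf hg, sub_apply]

lemma pd_mul (hf : DifferentiableAt ℝ f x) (hg : DifferentiableAt ℝ g x) (i : Fin d) :
    pd i (fun y => f y * g y) x = f x * pd i g x + g x * pd i f x := by
  simp only [pd, fderiv_fun_mul hf hg, add_apply, smul_apply, smul_eq_mul]

lemma pd_const_mul (hf : DifferentiableAt ℝ f x) (c : ℝ) (i : Fin d) :
    pd i (fun y => c * f y) x = c * pd i f x := by
  simp only [pd, fderiv_const_mul hf, smul_apply, smul_eq_mul]

lemma pd_sum {ι : Type*} {s : Finset ι} {F : ι → (Fin d → ℝ) → ℝ}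
    (hF : ∀ k ∈ s, DifferentiableAt ℝ (F k) x) (i : Fin d) :
    pd i (fun y => ∑ k ∈ s, F k y) x = ∑ k ∈ s, pd i (F k) x := by
  simp only [pd, fderiv_fun_sum hF, sum_apply]

lemma pd_comp {φ : ℝ → ℝ} {φ' : ℝ} (hφ : HasDerivAt φ φ' (f x)) (hf : DifferentiableAt ℝ f x)
    (i : Fin d) : pd i (fun y => φ (f y)) x = φ' * pd i f x := by
  have hcomp : fderiv ℝ (fun y => φ (f y)) x = φ' • fderiv ℝ f x :=
    (hφ.comp_hasFDerivAt x hf.hasFDerivAt).fderiv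
  simp only [pd, hcomp, smul_apply, smul_eq_mul]

lemma fderiv_fderiv_apply {E : Type*} [NormedAddCommGroup E] [NormedSpace ℝ E] {F : E → ℝ} {p : E}
    (hF : DifferentiableAt ℝ (fderiv ℝ F) p) (v v' : E) :
    fderiv ℝ (fun q => fderiv ℝ F q v) p v' = fderiv ℝ (fderiv ℝ F) p v' v := by
  rw [fderiv_clm_apply hF (differentiableAt_const v)]
  simp

lemma fderiv_fderiv_apply_comm {E : Type*} [NormedAddCommGroup E] [NormedSpace ℝ E] {F : E → ℝ}
    {p : E} (hF : ContDiffAt ℝ 2 F p) (v v' : E) :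
    fderiv ℝ (fun q => fderiv ℝ F q v) p v' = fderiv ℝ (fun q => fderiv ℝ F q v') p v := by
  have hd : DifferentiableAt ℝ (fderiv ℝ F) p :=
    (hF.fderiv_right (m := 1) (by norm_num)).differentiableAt (by simp)
  rw [fderiv_fderiv_apply hd, fderiv_fderiv_apply hd]
  exact hF.isSymmSndFDerivAt (by simp) v' v

lemma pd_comm (hf : ContDiffAt ℝ 2 f x) (i j : Fin d) : pd i (pd j f) x = pd j (pd i f) x :=
  fderiv_fderiv_apply_comm hf _ _

lemma SpacePeriodic.pd (hf : SpacePeriodic f) (i : Fin d) : SpacePeriodic (pd i f) := by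
  intro x n
  have hshift : (fun y => f (y + fun i => (n i : ℝ))) = f := funext fun y => hf y n
  conv_rhs => rw [← hshift]
  exact congrArg (fun L : (Fin d → ℝ) →L[ℝ] ℝ => L (Pi.single i 1)) (fderiv_comp_add_right _).symm

lemma dvg_sub {U W : (Fin d → ℝ) → Fin d → ℝ} (hU : DifferentiableAt ℝ U x)
    (hW : DifferentiableAt ℝ W x) :
    dvg (fun y i => U y i - W y i) x = dvg U x - dvg W x := by
  simp only [dvg, ← Finset.sum_sub_distrib]
  exact Finset.sum_congr rfl fun i _ => pd_sub (by fun_prop) (by fun_prop) i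

lemma dvg_smul {U : (Fin d → ℝ) → Fin d → ℝ} (hf : DifferentiableAt ℝ f x)
    (hU : DifferentiableAt ℝ U x) :
    dvg (fun y => f y • U y) x = f x * dvg U x + ∑ i, U x i * pd i f x := by
  simp only [dvg, Finset.mul_sum, ← Finset.sum_add_distrib]
  exact Finset.sum_congr rfl fun i _ => pd_mul hf (by fun_prop) i

lemma dvgM_add {S S' : (Fin d → ℝ) → Fin d → Fin d → ℝ} (hS : DifferentiableAt ℝ S x)
    (hS' : DifferentiableAt ℝ S' x) (i : Fin d) :
    dvgM (fun y i j => S y i j + S' y i j) x i = dvgM S x i + dvgM S' x i := by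
  simp only [dvgM, ← Finset.sum_add_distrib]
  exact Finset.sum_congr rfl fun j _ => pd_add (by fun_prop) (by fun_prop) j

lemma dvgM_const_mul {S : (Fin d → ℝ) → Fin d → Fin d → ℝ} (hS : DifferentiableAt ℝ S x) (c : ℝ)
    (i : Fin d) : dvgM (fun y i j => c * S y i j) x i = c * dvgM S x i := by
  simp only [dvgM, Finset.mul_sum]
  exact Finset.sum_congr rfl fun j _ => pd_const_mul (by fun_prop) c j

end PartialDerivatives

section SpaceTime

variable {d : ℕ} {T t : ℝ}

lemma hasDerivAt_slice {F : ℝ × (Fin d → ℝ) → ℝ} {x : Fin d → ℝ}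
    (hF : DifferentiableAt ℝ F (t, x)) :
    HasDerivAt (fun s => F (s, x)) (fderiv ℝ F (t, x) (1, 0)) t := by
  have hslice := (hF.hasFDerivAt.comp t (hasFDerivAt_prodMk_left t x)).hasDerivAt
  rwa [ContinuousLinearMap.comp_apply, ContinuousLinearMap.inl_apply] at hslice

lemma pd_slice {F : ℝ × (Fin d → ℝ) → ℝ} {x : Fin d → ℝ} (hF : DifferentiableAt ℝ F (t, x))
    (i : Fin d) : pd i (fun y => F (t, y)) x = fderiv ℝ F (t, x) (0, Pi.single i 1) := by
  have hslice : fderiv ℝ (fun y => F (t, y)) x = _ :=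
    (hF.hasFDerivAt.comp x (hasFDerivAt_prodMk_right t x)).fderiv
  simp [pd, hslice]

/-- A time-dependent field is smooth on the closed slab `[0,T] × ℝ^d`, up to the boundary. -/
def SmoothOnSlab {E : Type*} [NormedAddCommGroup E] [NormedSpace ℝ E] (T : ℝ)
    (f : ℝ → (Fin d → ℝ) → E) : Prop :=
  ContDiffOn ℝ ∞ (fun p : ℝ × (Fin d → ℝ) => f p.1 p.2) (Icc 0 T ×ˢ univ)

namespace SmoothOnSlab

lemma contDiff {E : Type*} [NormedAddCommGroup E] [NormedSpace ℝ E] {f : ℝ → (Fin d → ℝ) → E}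
    (hf : SmoothOnSlab T f) (ht : t ∈ Icc 0 T) : ContDiff ℝ ∞ (f t) :=
  ContDiffOn.comp_contDiff (g := fun p : ℝ × (Fin d → ℝ) => f p.1 p.2) hf
    (contDiff_const.prodMk contDiff_id) fun _ => ⟨ht, mem_univ _⟩

lemma eval {f : ℝ → (Fin d → ℝ) → Fin d → ℝ} (hf : SmoothOnSlab T f) (i : Fin d) :
    SmoothOnSlab T fun t x => f t x i :=
  contDiffOn_pi.1 hf i

lemma comp_pos {f : ℝ → (Fin d → ℝ) → ℝ} (hf : SmoothOnSlab T f) (hpos : ∀ t x, 0 < f t x)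
    {φ : ℝ → ℝ} (hφ : ContDiffOn ℝ ∞ φ (Ioi 0)) : SmoothOnSlab T fun t x => φ (f t x) :=
  ContDiffOn.comp hφ hf fun p _ => hpos p.1 p.2

variable {f : ℝ → (Fin d → ℝ) → ℝ}

lemma pd (hf : SmoothOnSlab T f) (hT : 0 < T) (i : Fin d) :
    SmoothOnSlab T fun t x => pd i (f t) x := by
  have hunique : UniqueDiffOn ℝ (Icc 0 T ×ˢ (univ : Set (Fin d → ℝ))) :=
    (uniqueDiffOn_Icc hT).prod uniqueDiffOn_univ
  have hsmooth := (ContDiffOn.fderivWithin (m := ∞) hf hunique (by simp)).clm_apply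
    (contDiffOn_const (c := ((0 : ℝ), (Pi.single i 1 : Fin d → ℝ))))
  refine hsmooth.congr ?_
  rintro ⟨t, x⟩ ⟨ht, -⟩
  have hdiff : DifferentiableWithinAt ℝ (fun p : ℝ × (Fin d → ℝ) => f p.1 p.2)
      (Icc 0 T ×ˢ univ) (t, x) :=
    ContDiffOn.differentiableOn hf (by simp) (t, x) ⟨ht, mem_univ _⟩
  have hslice : HasFDerivAt (f t) _ x :=
    hdiff.hasFDerivWithinAt.comp_hasFDerivAt x (hasFDerivAt_prodMk_right t x)
      (.of_forall fun _ => ⟨ht, mem_univ _⟩)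
  simp [_root_.pd, hslice.fderiv]

lemma contDiffAt (hf : SmoothOnSlab T f) (ht : t ∈ Ioo 0 T) (x : Fin d → ℝ) :
    ContDiffAt ℝ ∞ (fun p : ℝ × (Fin d → ℝ) => f p.1 p.2) (t, x) :=
  ContDiffOn.contDiffAt hf <|
    prod_mem_nhds (Icc_mem_nhds ht.1 ht.2) Filter.univ_mem

lemma differentiableAt (hf : SmoothOnSlab T f) (ht : t ∈ Ioo 0 T) (x : Fin d → ℝ) :
    DifferentiableAt ℝ (fun p : ℝ × (Fin d → ℝ) => f p.1 p.2) (t, x) :=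
  (hf.contDiffAt ht x).differentiableAt (by simp)

lemma deriv_eq_fderiv (hf : SmoothOnSlab T f) (ht : t ∈ Ioo 0 T) (x : Fin d → ℝ) :
    deriv (fun s => f s x) t = fderiv ℝ (fun p : ℝ × (Fin d → ℝ) => f p.1 p.2) (t, x) (1, 0) :=
  (hasDerivAt_slice (hf.differentiableAt ht x)).deriv

lemma hasDerivAt (hf : SmoothOnSlab T f) (ht : t ∈ Ioo 0 T) (x : Fin d → ℝ) :
    HasDerivAt (fun s => f s x) (deriv (fun s => f s x) t) t :=
  (hasDerivAt_slice (hf.differentiableAt ht x)).differentiableAt.hasDerivAt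

lemma continuousOn_deriv (hf : SmoothOnSlab T f) :
    ContinuousOn (fun p : ℝ × (Fin d → ℝ) => deriv (fun s => f s p.2) p.1) (Ioo 0 T ×ˢ univ) := by
  have hsmooth : ContDiffOn ℝ ∞ (fun p : ℝ × (Fin d → ℝ) => f p.1 p.2) (Ioo 0 T ×ˢ univ) :=
    ContDiffOn.mono hf (prod_mono Ioo_subset_Icc_self le_rfl)
  have hcont := ((hsmooth.fderiv_of_isOpen (m := ∞) (isOpen_Ioo.prod isOpen_univ)
    (by simp)).clm_apply (contDiffOn_const (c := ((1 : ℝ), (0 : Fin d → ℝ))))).continuousOn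
  exact hcont.congr fun p hp => hf.deriv_eq_fderiv hp.1 p.2

lemma hasDerivAt_pd (hf : SmoothOnSlab T f) (ht : t ∈ Ioo 0 T) (x : Fin d → ℝ) (i : Fin d) :
    HasDerivAt (fun s => _root_.pd i (f s) x)
      (_root_.pd i (fun y => deriv (fun s => f s y) t) x) t := by
  set F := fun p : ℝ × (Fin d → ℝ) => f p.1 p.2
  have hFderiv (v : ℝ × (Fin d → ℝ)) : DifferentiableAt ℝ (fun q => fderiv ℝ F q v) (t, x) :=
    (((hf.contDiffAt ht x).fderiv_right (m := 1) (by norm_cast)).differentiableAt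
      (by simp)).clm_apply (differentiableAt_const v)
  have hpd : (fun s => _root_.pd i (f s) x) =ᶠ[nhds t]
      fun s => fderiv ℝ F (s, x) (0, Pi.single i 1) := by
    filter_upwards [isOpen_Ioo.mem_nhds ht] with s hs using pd_slice (hf.differentiableAt hs x) i
  have hvalue : _root_.pd i (fun y => deriv (fun s => f s y) t) x =
      fderiv ℝ (fun q => fderiv ℝ F q (0, Pi.single i 1)) (t, x) (1, 0) := by
    simp only [hf.deriv_eq_fderiv ht]
    rw [pd_slice (hFderiv (1, 0)) i]
    exact fderiv_fderiv_apply_comm ((hf.contDiffAt ht x).of_le (by norm_cast)) _ _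
  rw [hvalue]
  exact (hasDerivAt_slice (hFderiv _)).congr_of_eventuallyEq hpd

end SmoothOnSlab

end SpaceTime

section TorusIntegral

variable {d : ℕ} {T t : ℝ}

lemma integrableOn_unitBox {f : (Fin d → ℝ) → ℝ} (hf : Continuous f) :
    IntegrableOn f (unitBox d) :=
  hf.continuousOn.integrableOn_compact isCompact_Icc

lemma integral_dvg_eq_zero {F : (Fin d → ℝ) → Fin d → ℝ} (hF : ContDiff ℝ ∞ F)
    (hper : SpacePeriodic F) : ∫ x in unitBox d, dvg F x = 0 := by
  obtain _ | n := d
  · simp [dvg]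
  have hdiff (i : Fin (n + 1)) : Differentiable ℝ fun y => F y i :=
    differentiable_pi.1 (hF.differentiable (by simp)) i
  have hface (i : Fin (n + 1)) (x : Fin n → ℝ) :
      F (i.insertNth 1 x) i = F (i.insertNth 0 x) i := by
    rw [← hper (i.insertNth 0 x) (Pi.single i 1)]
    congr 1
    funext k
    rcases Fin.eq_self_or_eq_succAbove i k with rfl | ⟨m, rfl⟩ <;> simp
  have hint : IntegrableOn (dvg F) (unitBox (n + 1)) :=
    integrableOn_unitBox (f := dvg F) (by unfold dvg; fun_prop)
  have hdiv := integral_divergence_of_hasFDerivAt_off_countable' (0 : Fin (n + 1) → ℝ) 1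
    zero_le_one (fun i y => F y i) (fun i => fderiv ℝ fun y => F y i) ∅ countable_empty
    (fun i => (hdiff i).continuous.continuousOn) (fun x _ i => (hdiff i x).hasFDerivAt) hint
  exact hdiv.trans <| Finset.sum_eq_zero fun i _ => sub_eq_zero.2 <| by
    simp only [Pi.one_apply, Pi.zero_apply, hface]

lemma SmoothOnSlab.continuousOn_integral {f : ℝ → (Fin d → ℝ) → ℝ} (hf : SmoothOnSlab T f)
    (hT : 0 ≤ T) : ContinuousOn (fun t => ∫ x in unitBox d, f t x) (Icc 0 T) := by
  have hcont : Continuous fun p : ℝ × (Fin d → ℝ) => f (projIcc 0 T hT p.1) p.2 :=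
    (ContDiffOn.continuousOn hf).comp_continuous
      (f := fun p : ℝ × (Fin d → ℝ) => ((projIcc 0 T hT p.1 : ℝ), p.2)) (by fun_prop)
      fun p => ⟨(projIcc 0 T hT p.1).2, mem_univ _⟩
  refine (continuous_parametric_integral_of_continuous (μ := volume)
    (f := fun t x => f (projIcc 0 T hT t) x) hcont
    (isCompact_Icc : IsCompact (unitBox d))).continuousOn.congr fun t ht => ?_
  simp only [projIcc_of_mem hT ht, unitBox]

lemma SmoothOnSlab.hasDerivAt_integral {f : ℝ → (Fin d → ℝ) → ℝ} (hf : SmoothOnSlab T f)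
    (ht : t ∈ Ioo 0 T) :
    IntegrableOn (fun x => deriv (fun s => f s x) t) (unitBox d) ∧
      HasDerivAt (fun s => ∫ x in unitBox d, f s x)
        (∫ x in unitBox d, deriv (fun s => f s x) t) t := by
  obtain ⟨a, ha, hat⟩ := exists_between ht.1
  obtain ⟨b, htb, hb⟩ := exists_between ht.2
  have hsub : Icc a b ⊆ Ioo 0 T := fun s hs => ⟨ha.trans_le hs.1, hs.2.trans_lt hb⟩
  have hmem {s : ℝ} (hs : s ∈ Ioo 0 T) : s ∈ Icc 0 T := Ioo_subset_Icc_self hs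
  obtain ⟨C, hC⟩ := (isCompact_Icc.prod isCompact_Icc :
    IsCompact (Icc a b ×ˢ unitBox d)).exists_bound_of_continuousOn
      (hf.continuousOn_deriv.mono (prod_mono hsub (subset_univ _)))
  have hderiv : Continuous fun x : Fin d → ℝ => deriv (fun s => f s x) t :=
    hf.continuousOn_deriv.comp_continuous (f := fun x => (t, x)) (by fun_prop)
      fun x => ⟨ht, mem_univ _⟩
  refine hasDerivAt_integral_of_dominated_loc_of_deriv_le
    (F' := fun s x => deriv (fun s => f s x) s) (bound := fun _ => C)
    (Icc_mem_nhds hat htb) ?_ (integrableOn_unitBox (hf.contDiff (hmem ht)).continuous)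
    hderiv.aestronglyMeasurable ?_ (integrableOn_unitBox continuous_const)
    (.of_forall fun x s hs => hf.hasDerivAt (hsub hs) x)
  · filter_upwards [isOpen_Ioo.mem_nhds ht] with s hs
    exact (hf.contDiff (hmem hs)).continuous.aestronglyMeasurable
  · exact (ae_restrict_iff' measurableSet_Icc).2 (.of_forall fun x hx s hs => hC (s, x) ⟨hs, hx⟩)

lemma integral_le_add_mul_of_deriv_le_dvg (hT : 0 ≤ T) {e B : ℝ → (Fin d → ℝ) → ℝ} {K : ℝ}
    (he : SmoothOnSlab T e) (hB : ∀ t ∈ Ioo 0 T, Continuous (B t))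
    (hK : ∀ t ∈ Ioo 0 T, ∫ x in unitBox d, B t x ≤ K)
    (hle : ∀ t ∈ Ioo 0 T, ∃ F : (Fin d → ℝ) → Fin d → ℝ, ContDiff ℝ ∞ F ∧ SpacePeriodic F ∧
      ∀ x, deriv (fun s => e s x) t ≤ dvg F x + B t x)
    (ht : t ∈ Icc 0 T) :
    ∫ x in unitBox d, e t x ≤ (∫ x in unitBox d, e 0 x) + K * t := by
  have hderiv (s : ℝ) (hs : s ∈ Ioo 0 T) : deriv (fun t => ∫ x in unitBox d, e t x) s ≤ K := by
    obtain ⟨F, hF, hper, hbound⟩ := hle s hs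
    have hdvg : IntegrableOn (dvg F) (unitBox d) :=
      integrableOn_unitBox (f := dvg F) (by unfold dvg; fun_prop)
    have hBint := integrableOn_unitBox (hB s hs)
    calc deriv (fun t => ∫ x in unitBox d, e t x) s
        = ∫ x in unitBox d, deriv (fun t => e t x) s := (he.hasDerivAt_integral hs).2.deriv
      _ ≤ ∫ x in unitBox d, (dvg F x + B s x) :=
          integral_mono (he.hasDerivAt_integral hs).1 (hdvg.add hBint) hbound
      _ = ∫ x in unitBox d, B s x := by
          rw [integral_add hdvg hBint, integral_dvg_eq_zero hF hper, zero_add]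
      _ ≤ K := hK s hs
  have hmean := (convex_Icc (0 : ℝ) T).image_sub_le_mul_sub_of_deriv_le
    (he.continuousOn_integral hT) (C := K)
    (by
      rw [interior_Icc]
      exact fun s hs => (he.hasDerivAt_integral hs).2.differentiableAt.differentiableWithinAt)
    (by rwa [interior_Icc]) 0 ⟨le_rfl, hT⟩ t ht ht.1
  linarith

end TorusIntegral

section Coefficients

variable {ε γ κ ν r : ℝ}

lemma muof_pos (hκ : 0 < κ) (hνκ : κ < ν) : 0 < muof ν κ := by
  rw [muof, sub_pos, sqrt_lt' (hκ.trans hνκ)]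
  exact sub_lt_self _ (pow_pos hκ 2)

lemma muof_le : muof ν κ ≤ ν := sub_le_self _ (sqrt_nonneg _)

lemma muof_mul (hκ : 0 < κ) (hνκ : κ < ν) : muof ν κ * (2 * ν - muof ν κ) = κ ^ 2 := by
  have hsqrt : √(ν ^ 2 - κ ^ 2) ^ 2 = ν ^ 2 - κ ^ 2 := sq_sqrt (by nlinarith)
  rw [muof]
  linear_combination -hsqrt

lemma contDiffOn_hfun : ContDiffOn ℝ ∞ (hfun ε γ) (Ioi 0) := by
  have hrpow (a : ℝ) : ContDiffOn ℝ ∞ (fun r : ℝ => r ^ a) (Ioi 0) :=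
    contDiffOn_id.rpow_const_of_ne fun r hr => ne_of_gt hr
  exact (contDiffOn_id.add (contDiffOn_const.mul (hrpow _))).add (contDiffOn_const.mul (hrpow _))

lemma contDiffOn_deriv_hfun : ContDiffOn ℝ ∞ (deriv (hfun ε γ)) (Ioi 0) :=
  contDiffOn_hfun.deriv_of_isOpen isOpen_Ioi (by simp)

lemma contDiffOn_gfun : ContDiffOn ℝ ∞ (gfun ε γ) (Ioi 0) :=
  (contDiffOn_id.mul contDiffOn_deriv_hfun).sub contDiffOn_hfun

lemma hasDerivAt_hfun (hr : 0 < r) : HasDerivAt (hfun ε γ) (deriv (hfun ε γ) r) r :=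
  ((contDiffOn_hfun.contDiffAt (Ioi_mem_nhds hr)).differentiableAt (by simp)).hasDerivAt

lemma mul_deriv_hfun (hr : 0 < r) :
    r * deriv (hfun ε γ) r = r + 7 / 8 * (ε * r ^ (7 / 8 : ℝ)) + γ * (ε * r ^ γ) := by
  have hderiv : HasDerivAt (hfun ε γ)
      (1 + ε * (7 / 8 * r ^ (7 / 8 - 1 : ℝ)) + ε * (γ * r ^ (γ - 1))) r :=
    ((hasDerivAt_id r).add ((hasDerivAt_rpow_const (.inl hr.ne')).const_mul ε)).add
      ((hasDerivAt_rpow_const (.inl hr.ne')).const_mul ε)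
  rw [hderiv.deriv, rpow_sub_one hr.ne', rpow_sub_one hr.ne']
  field_simp

lemma deriv_hfun_pos (hε : 0 ≤ ε) (hγ : 0 ≤ γ) (hr : 0 < r) : 0 < deriv (hfun ε γ) r := by
  refine pos_of_mul_pos_right ?_ hr.le
  rw [mul_deriv_hfun hr]
  positivity

lemma hfun_pos (hε : 0 ≤ ε) (hr : 0 < r) : 0 < hfun ε γ r := by
  unfold hfun
  positivity

lemma mul_rpow_le_hfun (hε : 0 ≤ ε) (hr : 0 ≤ r) : ε * r ^ γ ≤ hfun ε γ r := by
  have : 0 ≤ r + ε * r ^ (7 / 8 : ℝ) := by positivity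
  exact le_add_of_nonneg_left this

lemma neg_hfun_div_le_gfun (hε : 0 ≤ ε) (hγ : 1 ≤ γ) (hr : 0 < r) :
    -(hfun ε γ r / 8) ≤ gfun ε γ r := by
  have hrγ : 0 ≤ ε * r ^ γ := by positivity
  rw [gfun, mul_deriv_hfun hr]
  unfold hfun
  nlinarith

lemma gfun_le_mul_hfun (hε : 0 ≤ ε) (hγ : 1 ≤ γ) (hr : 0 < r) :
    gfun ε γ r ≤ γ * hfun ε γ r := by
  have hr78 : 0 ≤ ε * r ^ (7 / 8 : ℝ) := by positivity
  have hrγ : 0 ≤ ε * r ^ γ := by positivity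
  rw [gfun, mul_deriv_hfun hr]
  unfold hfun
  nlinarith

lemma lamfun_mul_rpow_le_ptil (hε : 0 < ε) (hε1 : ε ≤ 1) (hγ : 0 ≤ γ) (hεγ : ε * γ ≤ 1)
    (hr : 0 < r) : lamfun ε * r ^ γ ≤ ptil ε r := by
  have hγε : γ ≤ 1 / ε ^ 2 := by
    rw [le_div_iff₀ (by positivity)]
    nlinarith
  refine mul_le_mul_of_nonneg_left ?_ (exp_pos _).le
  rcases le_total 1 r with h1r | hr1
  · calc r ^ γ ≤ r ^ (1 / ε ^ 2) := rpow_le_rpow_of_exponent_le h1r hγε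
      _ ≤ r ^ (1 / ε ^ 2) + r ^ (-(1 / ε ^ 2)) := le_add_of_nonneg_right (by positivity)
  · calc r ^ γ ≤ 1 := rpow_le_one hr.le hr1 hγ
      _ ≤ r ^ (-(1 / ε ^ 2)) :=
          one_le_rpow_of_pos_of_le_one_of_nonpos hr hr1 (neg_nonpos.2 (by positivity))
      _ ≤ r ^ (1 / ε ^ 2) + r ^ (-(1 / ε ^ 2)) := le_add_of_nonneg_left (by positivity)

end Coefficients

section EffectiveVelocity

variable {d : ℕ}

/-- The tensor `h A + g (tr A) I`: with `A = ∇Z`, the viscous stress of the velocity field `Z` for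
the viscosity coefficients `h` and `g`. -/
def viscousTensor (h g : ℝ) (A : Fin d → Fin d → ℝ) (i j : Fin d) : ℝ :=
  h * A i j + g * (∑ k, A k k) * if i = j then 1 else 0

/-- The stress tensor `ν S + (ν − μ) Sᵀ`, with `S` the viscous tensor, which governs the effective
velocity. -/
def effectiveStress (ν μ h g : ℝ) (A : Fin d → Fin d → ℝ) (i j : Fin d) : ℝ :=
  ν * viscousTensor h g A i j + (ν - μ) * viscousTensor h g A j i

section Smoothness

variable {U : (Fin d → ℝ) → Fin d → ℝ} {f g : (Fin d → ℝ) → ℝ}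

@[fun_prop]
lemma contDiff_grad (hf : ContDiff ℝ ∞ f) : ContDiff ℝ ∞ (grad f) :=
  contDiff_pi.2 fun i => contDiff_pd hf i

@[fun_prop]
lemma contDiff_jac (hU : ContDiff ℝ ∞ U) : ContDiff ℝ ∞ (jac U) := by
  unfold jac
  fun_prop

@[fun_prop]
lemma contDiff_dvg (hU : ContDiff ℝ ∞ U) : ContDiff ℝ ∞ (dvg U) := by
  unfold dvg
  fun_prop

@[fun_prop]
lemma contDiff_viscousTensor {A : (Fin d → ℝ) → Fin d → Fin d → ℝ} (hf : ContDiff ℝ ∞ f)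
    (hg : ContDiff ℝ ∞ g) (hA : ContDiff ℝ ∞ A) :
    ContDiff ℝ ∞ fun y => viscousTensor (f y) (g y) (A y) := by
  unfold viscousTensor
  fun_prop

@[fun_prop]
lemma differentiableAt_viscousTensor {A : (Fin d → ℝ) → Fin d → Fin d → ℝ} {x : Fin d → ℝ}
    (hf : DifferentiableAt ℝ f x) (hg : DifferentiableAt ℝ g x) (hA : DifferentiableAt ℝ A x) :
    DifferentiableAt ℝ (fun y => viscousTensor (f y) (g y) (A y)) x := by
  unfold viscousTensor
  fun_prop

@[fun_prop]
lemma contDiff_effectiveStress {A : (Fin d → ℝ) → Fin d → Fin d → ℝ} {ν μ : ℝ}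
    (hf : ContDiff ℝ ∞ f) (hg : ContDiff ℝ ∞ g) (hA : ContDiff ℝ ∞ A) :
    ContDiff ℝ ∞ fun y => effectiveStress ν μ (f y) (g y) (A y) := by
  unfold effectiveStress
  fun_prop

end Smoothness

section Identities

variable {R f g : (Fin d → ℝ) → ℝ} {U Z : (Fin d → ℝ) → Fin d → ℝ} {x : Fin d → ℝ}

lemma dvgM_add_diagonal {S : (Fin d → ℝ) → Fin d → Fin d → ℝ} (hS : ContDiff ℝ ∞ S)
    (hf : ContDiff ℝ ∞ f) (i : Fin d) :
    dvgM (fun y i j => S y i j + f y * if i = j then 1 else 0) x i =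
      dvgM S x i + grad f x i := by
  rw [dvgM_add (by fun_prop) (by fun_prop)]
  have hterm (j : Fin d) : pd j (fun y => f y * if i = j then (1 : ℝ) else 0) x =
      if i = j then pd j f x else 0 := by
    split_ifs <;> simp [pd]
  simp only [dvgM, hterm, Finset.sum_ite_eq, Finset.mem_univ, if_true, grad]

lemma dvgM_viscousTensor (hf : ContDiff ℝ ∞ f) (hg : ContDiff ℝ ∞ g) (hZ : ContDiff ℝ ∞ Z)
    (i : Fin d) :
    dvgM (fun y => viscousTensor (f y) (g y) (jac Z y)) x i =
      dvgM (fun y i j => f y * jac Z y i j) x i + grad (fun y => g y * dvg Z y) x i :=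
  dvgM_add_diagonal (S := fun y i j => f y * jac Z y i j) (f := fun y => g y * dvg Z y)
    (by fun_prop) (by fun_prop) i

lemma dvgM_viscousTensor_transpose (hf : ContDiff ℝ ∞ f) (hg : ContDiff ℝ ∞ g)
    (hZ : ContDiff ℝ ∞ Z) (i : Fin d) :
    dvgM (fun y i j => viscousTensor (f y) (g y) (jac Z y) j i) x i =
      dvgM (fun y i j => f y * jac Z y j i) x i + grad (fun y => g y * dvg Z y) x i := by
  rw [← dvgM_add_diagonal (S := fun y i j => f y * jac Z y j i) (by fun_prop) (by fun_prop)]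
  simp only [viscousTensor, dvg, jac, eq_comm]

lemma jac_grad_comm (hf : ContDiff ℝ ∞ f) (i j : Fin d) :
    jac (grad f) x i j = jac (grad f) x j i :=
  pd_comm (hf.contDiffAt.of_le (by norm_cast)) j i

lemma sum_pd_jac_transpose (hZ : ContDiff ℝ ∞ Z) (i : Fin d) :
    ∑ j, pd j (fun y => jac Z y j i) x = pd i (dvg Z) x := by
  have hcomm (j : Fin d) : pd j (fun y => jac Z y j i) x = pd i (pd j fun y => Z y j) x :=
    pd_comm (ContDiff.contDiffAt (by fun_prop) |>.of_le (m := 2) (n := ∞) (by norm_cast)) j i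
  simp only [hcomm]
  exact (pd_sum (F := fun j => pd j fun y => Z y j) (fun j _ => by fun_prop) i).symm

/- The product rule applied to `H ∂_i Z_j`, in which `H ∂_i (div Z)` cancels against the part
`-∂_i (H div Z)` of the second term because `∇H = R v = Q ∇R`. -/
lemma dvgM_viscousTensor_transpose_eq {H Q : (Fin d → ℝ) → ℝ} {v : Fin d → ℝ}
    (hR : ContDiff ℝ ∞ R) (hH : ContDiff ℝ ∞ H) (hQ : ContDiff ℝ ∞ Q) (hZ : ContDiff ℝ ∞ Z)
    (hHv : ∀ j, pd j H x = R x * v j) (hQv : ∀ j, Q x * pd j R x = R x * v j) (i : Fin d) :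
    dvgM (fun y i j => viscousTensor (H y) (R y * Q y - H y) (jac Z y) j i) x i =
      R x * (grad (fun y => Q y * dvg Z y) x i + ∑ j, v j * jac Z x j i) := by
  have hgrad : grad (fun y => (R y * Q y - H y) * dvg Z y) x i =
      R x * pd i (fun y => Q y * dvg Z y) x + Q x * dvg Z x * pd i R x
        - (H x * pd i (dvg Z) x + dvg Z x * pd i H x) := by
    simp only [grad, sub_mul, mul_assoc]
    rw [pd_sub (by fun_prop) (by fun_prop), pd_mul (f := R) (by fun_prop) (by fun_prop),
      pd_mul (f := H) (by fun_prop) (by fun_prop)]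
    ring
  have hdvgM : dvgM (fun y i j => H y * jac Z y j i) x i =
      H x * pd i (dvg Z) x + R x * ∑ j, v j * jac Z x j i := by
    have hterm (j : Fin d) : pd j (fun y => H y * jac Z y j i) x =
        H x * pd j (fun y => jac Z y j i) x + R x * (v j * jac Z x j i) := by
      rw [pd_mul (by fun_prop) (by fun_prop), hHv]
      ring
    simp only [dvgM, hterm, Finset.sum_add_distrib, ← Finset.mul_sum, sum_pd_jac_transpose hZ]
  rw [dvgM_viscousTensor_transpose hH (by fun_prop) hZ, hgrad, hdvgM, grad]
  linear_combination dvg Z x * (hQv i) - dvg Z x * (hHv i)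

lemma viscous_term_eq (hf : ContDiff ℝ ∞ f) (hg : ContDiff ℝ ∞ g) (hZ : ContDiff ℝ ∞ Z) (ν : ℝ)
    (i : Fin d) :
    2 * ν * dvgM (fun y i j => f y * symD Z y i j) x i
        + 2 * ν * grad (fun y => g y * dvg Z y) x i =
      ν * dvgM (fun y => viscousTensor (f y) (g y) (jac Z y)) x i
        + ν * dvgM (fun y i j => viscousTensor (f y) (g y) (jac Z y) j i) x i := by
  have hsym : dvgM (fun y i j => f y * symD Z y i j) x i =
      1 / 2 * (dvgM (fun y i j => f y * jac Z y i j) x i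
        + dvgM (fun y i j => f y * jac Z y j i) x i) := by
    rw [← dvgM_add (by fun_prop) (by fun_prop), ← dvgM_const_mul (by fun_prop)]
    congr! 4
    simp only [symD]
    ring
  rw [dvgM_viscousTensor hf hg hZ, dvgM_viscousTensor_transpose hf hg hZ, hsym]
  ring

lemma viscousTensor_add_mul (h g μ : ℝ) (A B : Fin d → Fin d → ℝ) (i j : Fin d) :
    viscousTensor h g (fun i j => A i j + μ * B i j) i j =
      viscousTensor h g A i j + μ * viscousTensor h g B i j := by
  simp only [viscousTensor, Finset.sum_add_distrib, ← Finset.mul_sum]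
  ring

lemma jac_add_const_mul {V : (Fin d → ℝ) → Fin d → ℝ} (hU : ContDiff ℝ ∞ U) (hV : ContDiff ℝ ∞ V)
    (μ : ℝ) (i j : Fin d) :
    jac (fun z k => U z k + μ * V z k) x i j = jac U x i j + μ * jac V x i j :=
  (pd_add (by fun_prop) (by fun_prop) j).trans
    (congrArg _ (pd_const_mul (by fun_prop) μ j))

/- `∇V` is symmetric, so the two parts of the stress of `V` agree and contribute the factor
`μ (ν + (ν - μ)) = κ²`. -/
lemma dvgM_effectiveStress {μ ν κ : ℝ} (hμ : μ * (2 * ν - μ) = κ ^ 2) {V : (Fin d → ℝ) → Fin d → ℝ}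
    (hf : ContDiff ℝ ∞ f) (hg : ContDiff ℝ ∞ g) (hU : ContDiff ℝ ∞ U) (hV : ContDiff ℝ ∞ V)
    (hsymm : ∀ y i j, jac V y i j = jac V y j i) (i : Fin d) :
    dvgM (fun y => effectiveStress ν μ (f y) (g y) (jac (fun z k => U z k + μ * V z k) y)) x i =
      ν * dvgM (fun y => viscousTensor (f y) (g y) (jac U y)) x i
        + (ν - μ) * dvgM (fun y i j => viscousTensor (f y) (g y) (jac U y) j i) x i
        + κ ^ 2 * dvgM (fun y i j => viscousTensor (f y) (g y) (jac V y) j i) x i := by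
  have hjac (y : Fin d → ℝ) : jac (fun z k => U z k + μ * V z k) y =
      fun i j => jac U y i j + μ * jac V y i j :=
    funext₂ (jac_add_const_mul hU hV μ)
  have hVsymm (y : Fin d → ℝ) (i j : Fin d) : viscousTensor (f y) (g y) (jac V y) i j =
      viscousTensor (f y) (g y) (jac V y) j i := by
    simp only [viscousTensor, hsymm y i j, eq_comm]
  rw [← dvgM_const_mul (by fun_prop), ← dvgM_const_mul (by fun_prop),
    ← dvgM_const_mul (by fun_prop), ← dvgM_add (by fun_prop) (by fun_prop),
    ← dvgM_add (by fun_prop) (by fun_prop), ← hμ]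
  congr! 1
  funext y i j
  simp only [effectiveStress, hjac, viscousTensor_add_mul, hVsymm y i j]
  ring

end Identities

end EffectiveVelocity

section Drift

variable {d : ℕ} {ε γ : ℝ} {Φ : ℝ → ℝ} {R : (Fin d → ℝ) → ℝ}

lemma IsPhieps.hasDerivAt (hΦ : IsPhieps ε γ Φ) {r : ℝ} (hr : 0 < r) :
    HasDerivAt Φ (deriv (hfun ε γ) r / r) r := by
  rw [← hΦ.2 r hr, mul_div_cancel_left₀ _ hr.ne']
  exact ((hΦ.1.contDiffAt (Ioi_mem_nhds hr)).differentiableAt (by simp)).hasDerivAt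

lemma IsPhieps.contDiff_comp (hΦ : IsPhieps ε γ Φ) (hR : ContDiff ℝ ∞ R) (hpos : ∀ x, 0 < R x) :
    ContDiff ℝ ∞ fun x => Φ (R x) :=
  hΦ.1.comp_contDiff hR hpos

lemma IsPhieps.mul_grad_comp (hΦ : IsPhieps ε γ Φ) (hR : ContDiff ℝ ∞ R) (hpos : ∀ x, 0 < R x)
    (x : Fin d → ℝ) (i : Fin d) :
    R x * grad (fun y => Φ (R y)) x i = deriv (hfun ε γ) (R x) * pd i R x := by
  rw [grad, pd_comp (hΦ.hasDerivAt (hpos x)) (by fun_prop)]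
  field_simp [(hpos x).ne']

lemma mul_dvg_smul_grad_sqrt_div_sqrt {Q : (Fin d → ℝ) → ℝ} {V : (Fin d → ℝ) → Fin d → ℝ}
    (hR : ContDiff ℝ ∞ R) (hpos : ∀ x, 0 < R x) (hV : ContDiff ℝ ∞ V)
    (hQV : ∀ x i, Q x * pd i R x = R x * V x i) (x : Fin d → ℝ) :
    Q x * dvg (fun y => Q y • grad (fun z => √(R z)) y) x / √(R x) =
      1 / 2 * (Q x * dvg V x + 1 / 2 * ∑ i, V x i ^ 2) := by
  have hpd (y : Fin d → ℝ) (i : Fin d) : pd i (fun z => √(R z)) y = 1 / (2 * √(R y)) * pd i R y :=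
    pd_comp (hasDerivAt_sqrt (hpos y).ne') (by fun_prop) i
  have hsq (y : Fin d → ℝ) : √(R y) ^ 2 = R y := sq_sqrt (hpos y).le
  have hsqrt_pos (y : Fin d → ℝ) : 0 < √(R y) := sqrt_pos.2 (hpos y)
  have hfield : (fun y => Q y • grad (fun z => √(R z)) y) =
      fun y => √(R y) • fun i => 1 / 2 * V y i := by
    funext y i
    rw [Pi.smul_apply, Pi.smul_apply, smul_eq_mul, smul_eq_mul, grad, hpd]
    have := hsqrt_pos y
    field_simp
    rw [hsq, hQV]
  have hterm (i : Fin d) : Q x * (1 / 2 * V x i * pd i (fun z => √(R z)) x) =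
      √(R x) * (1 / 4 * V x i ^ 2) := by
    rw [hpd]
    have := hsqrt_pos x
    field_simp
    rw [hsq]
    linear_combination 4 * V x i * hQV x i
  have hdvg : dvg (fun y i => 1 / 2 * V y i) x = 1 / 2 * dvg V x := by
    simp only [dvg, Finset.mul_sum]
    exact Finset.sum_congr rfl fun i _ => pd_const_mul (by fun_prop) _ i
  have hsqrt : DifferentiableAt ℝ (fun z => √(R z)) x :=
    DifferentiableAt.sqrt (by fun_prop) (hpos x).ne'
  rw [hfield, dvg_smul hsqrt (by fun_prop), hdvg, mul_add, Finset.mul_sum,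
    Finset.sum_congr rfl fun i _ => hterm i, ← Finset.mul_sum, ← Finset.mul_sum]
  have := hsqrt_pos x
  field_simp
  ring

lemma pd_sum_sq {V : (Fin d → ℝ) → Fin d → ℝ} (hV : ContDiff ℝ ∞ V) (x : Fin d → ℝ) (i : Fin d) :
    pd i (fun y => ∑ j, V y j ^ 2) x = 2 * ∑ j, V x j * jac V x j i := by
  rw [pd_sum (F := fun j y => V y j ^ 2) fun j _ => by fun_prop, Finset.mul_sum]
  refine Finset.sum_congr rfl fun j _ => ?_
  simp only [sq]
  rw [pd_mul (by fun_prop) (by fun_prop), jac]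
  ring

section Identities

variable (hΦ : IsPhieps ε γ Φ) (hR : ContDiff ℝ ∞ R) (hpos : ∀ x, 0 < R x)
include hΦ hR hpos

lemma dvgM_viscousTensor_drift_eq {Z : (Fin d → ℝ) → Fin d → ℝ} (hZ : ContDiff ℝ ∞ Z)
    (x : Fin d → ℝ) (i : Fin d) :
    dvgM (fun y i j => viscousTensor (hfun ε γ (R y)) (gfun ε γ (R y)) (jac Z y) j i) x i =
      R x * (grad (fun y => deriv (hfun ε γ) (R y) * dvg Z y) x i
        + ∑ j, grad (fun y => Φ (R y)) x j * jac Z x j i) :=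
  dvgM_viscousTensor_transpose_eq hR (contDiffOn_hfun.comp_contDiff hR hpos)
    (contDiffOn_deriv_hfun.comp_contDiff hR hpos) hZ
    (fun j => (pd_comp (hasDerivAt_hfun (hpos x)) (by fun_prop) j).trans
      (hΦ.mul_grad_comp hR hpos x j).symm)
    (fun j => (hΦ.mul_grad_comp hR hpos x j).symm) i

/- The Bohm-type identity: `2 ρ K` is the divergence of the stress of the drift `V = ∇φ(ρ)`,
because `2K = ∇(h'(ρ) div V + |V|² / 2)`. -/
lemma two_mul_Kvec_eq (x : Fin d → ℝ) (i : Fin d) :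
    2 * R x * Kvec ε γ R x i =
      dvgM (fun y i j => viscousTensor (hfun ε γ (R y)) (gfun ε γ (R y))
        (jac (grad fun z => Φ (R z)) y) j i) x i := by
  set V := grad fun y => Φ (R y)
  set Q := fun y => deriv (hfun ε γ) (R y)
  have hV : ContDiff ℝ ∞ V := contDiff_grad (hΦ.contDiff_comp hR hpos)
  have hQ : ContDiff ℝ ∞ Q := contDiffOn_deriv_hfun.comp_contDiff hR hpos
  have hfield (y : Fin d → ℝ) : Q y * dvg (fun z => Q z • grad (fun a => √(R a)) z) y / √(R y) =
      1 / 2 * (Q y * dvg V y + 1 / 2 * ∑ j, V y j ^ 2) :=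
    mul_dvg_smul_grad_sqrt_div_sqrt hR hpos hV
      (fun z j => (hΦ.mul_grad_comp hR hpos z j).symm) y
  have hKvec : Kvec ε γ R x i =
      pd i (fun y => 1 / 2 * (Q y * dvg V y + 1 / 2 * ∑ j, V y j ^ 2)) x :=
    congrArg (fun f => pd i f x) (funext hfield)
  rw [hKvec, dvgM_viscousTensor_drift_eq hΦ hR hpos hV, pd_const_mul (by fun_prop),
    pd_add (by fun_prop) (by fun_prop), pd_const_mul (by fun_prop), pd_sum_sq hV, grad]
  ring

end Identities

end Drift

section EffectiveSystem

variable {d : ℕ} {ε γ ν κ T t : ℝ} {P Φ : ℝ → ℝ} {ρ : ℝ → (Fin d → ℝ) → ℝ}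
  {u w : ℝ → (Fin d → ℝ) → Fin d → ℝ}

/-- Smooth positive periodic solutions of the continuity equation on the slab `[0,T] × ℝ^d`. -/
structure IsContinuitySol (T : ℝ) (ρ : ℝ → (Fin d → ℝ) → ℝ)
    (u : ℝ → (Fin d → ℝ) → Fin d → ℝ) : Prop where
  smooth_density : SmoothOnSlab T ρ
  smooth_velocity : SmoothOnSlab T u
  density_pos : ∀ t x, 0 < ρ t x
  periodic_density : ∀ t, SpacePeriodic (ρ t)
  periodic_velocity : ∀ t, SpacePeriodic (u t)
  continuity : ∀ t ∈ Ioo 0 T, ∀ x,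
    deriv (fun s => ρ s x) t + dvg (fun y => ρ t y • u t y) x = 0

namespace IsContinuitySol

variable (h : IsContinuitySol T ρ u)
include h

lemma contDiff_density (ht : t ∈ Ioo 0 T) : ContDiff ℝ ∞ (ρ t) :=
  h.smooth_density.contDiff (Ioo_subset_Icc_self ht)

lemma contDiff_velocity (ht : t ∈ Ioo 0 T) : ContDiff ℝ ∞ (u t) :=
  h.smooth_velocity.contDiff (Ioo_subset_Icc_self ht)

lemma contDiff_hfun (ht : t ∈ Ioo 0 T) : ContDiff ℝ ∞ fun x => hfun ε γ (ρ t x) :=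
  contDiffOn_hfun.comp_contDiff (h.contDiff_density ht) (h.density_pos t)

lemma contDiff_gfun (ht : t ∈ Ioo 0 T) : ContDiff ℝ ∞ fun x => gfun ε γ (ρ t x) :=
  contDiffOn_gfun.comp_contDiff (h.contDiff_density ht) (h.density_pos t)

lemma deriv_mul_add_dvg {f : ℝ → (Fin d → ℝ) → ℝ} (hf : SmoothOnSlab T f) (ht : t ∈ Ioo 0 T)
    (x : Fin d → ℝ) :
    deriv (fun s => ρ s x * f s x) t + dvg (fun y j => ρ t y * f t y * u t y j) x =
      ρ t x * (deriv (fun s => f s x) t + ∑ j, u t x j * pd j (f t) x) := by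
  have hρ := h.contDiff_density ht
  have hu := h.contDiff_velocity ht
  have hft := hf.contDiff (Ioo_subset_Icc_self ht)
  have htime : deriv (fun s => ρ s x * f s x) t =
      deriv (fun s => ρ s x) t * f t x + ρ t x * deriv (fun s => f s x) t :=
    ((h.smooth_density.hasDerivAt ht x).mul (hf.hasDerivAt ht x)).deriv
  have hflux : (fun y j => ρ t y * f t y * u t y j) = fun y => f t y • ρ t y • u t y := by
    funext y j
    simp only [Pi.smul_apply, smul_eq_mul]
    ring
  rw [htime, hflux, dvg_smul (by fun_prop) (by fun_prop),
    eq_neg_of_add_eq_zero_left (h.continuity t ht x)]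
  simp only [Pi.smul_apply, smul_eq_mul, mul_assoc, ← Finset.mul_sum]
  ring

lemma deriv_comp_density (ht : t ∈ Ioo 0 T) {x : Fin d → ℝ} {φ : ℝ → ℝ} {φ' : ℝ}
    (hφ : HasDerivAt φ φ' (ρ t x)) :
    deriv (fun s => φ (ρ s x)) t =
      -(φ' * ρ t x * dvg (u t) x + ∑ j, u t x j * pd j (fun y => φ (ρ t y)) x) := by
  have hρ := h.contDiff_density ht
  have hu := h.contDiff_velocity ht
  have htime : deriv (fun s => φ (ρ s x)) t = φ' * deriv (fun s => ρ s x) t :=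
    (hφ.comp t (h.smooth_density.hasDerivAt ht x)).deriv
  have hsum : ∑ j, u t x j * pd j (fun y => φ (ρ t y)) x = φ' * ∑ j, u t x j * pd j (ρ t) x := by
    rw [Finset.mul_sum]
    exact Finset.sum_congr rfl fun j _ => by rw [pd_comp hφ (by fun_prop)]; ring
  rw [htime, hsum, eq_neg_of_add_eq_zero_left (h.continuity t ht x),
    dvg_smul (by fun_prop) (by fun_prop)]
  ring

/- `φ(ρ)` satisfies `∂_t φ(ρ) = -(h'(ρ) div u + u · ∇φ(ρ))`; apply `ρ ∂_i`. -/
lemma mul_deriv_drift (hΦ : IsPhieps ε γ Φ) (ht : t ∈ Ioo 0 T) (x : Fin d → ℝ) (i : Fin d) :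
    ρ t x * deriv (fun s => grad (fun y => Φ (ρ s y)) x i) t =
      -(dvgM (fun y i j => viscousTensor (hfun ε γ (ρ t y)) (gfun ε γ (ρ t y))
          (jac (u t) y) j i) x i
        + ρ t x * ∑ j, u t x j * jac (grad fun y => Φ (ρ t y)) x i j) := by
  have hρ := h.contDiff_density ht
  have hu := h.contDiff_velocity ht
  have hpos := h.density_pos t
  have hΦρ := hΦ.contDiff_comp hρ hpos
  set V := grad fun y => Φ (ρ t y)
  set Q := fun y => deriv (hfun ε γ) (ρ t y)
  have hV : ContDiff ℝ ∞ V := contDiff_grad hΦρ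
  have hQ : ContDiff ℝ ∞ Q := contDiffOn_deriv_hfun.comp_contDiff hρ hpos
  have htime (y : Fin d → ℝ) : deriv (fun s => Φ (ρ s y)) t =
      -1 * (Q y * dvg (u t) y + ∑ j, u t y j * V y j) := by
    rw [h.deriv_comp_density ht (hΦ.hasDerivAt (hpos y)), div_mul_cancel₀ _ (hpos y).ne',
      neg_one_mul]
    rfl
  have hterm (j : Fin d) : pd i (fun y => u t y j * V y j) x =
      u t x j * jac V x i j + V x j * jac (u t) x j i := by
    rw [pd_mul (by fun_prop) (by fun_prop), jac_grad_comm hΦρ i j]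
    rfl
  have hstress : dvgM (fun y i j => viscousTensor (hfun ε γ (ρ t y)) (gfun ε γ (ρ t y))
      (jac (u t) y) j i) x i =
        ρ t x * (pd i (fun y => Q y * dvg (u t) y) x + ∑ j, V x j * jac (u t) x j i) :=
    dvgM_viscousTensor_drift_eq hΦ hρ hpos hu x i
  have hV_time : deriv (fun s => grad (fun y => Φ (ρ s y)) x i) t =
      pd i (fun y => deriv (fun s => Φ (ρ s y)) t) x :=
    ((h.smooth_density.comp_pos h.density_pos hΦ.1).hasDerivAt_pd ht x i).deriv
  rw [hV_time, funext htime, pd_const_mul (by fun_prop), pd_add (by fun_prop) (by fun_prop),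
    pd_sum (F := fun j y => u t y j * V y j) fun j _ => by fun_prop, hstress]
  simp only [hterm, Finset.sum_add_distrib]
  ring

end IsContinuitySol

/-- The effective stress of the velocity field `W` for the viscosity coefficients `h_ε(R)` and
`g_ε(R)` of (QNS_ε). -/
def stressField (ε γ ν κ : ℝ) (R : (Fin d → ℝ) → ℝ) (W : (Fin d → ℝ) → Fin d → ℝ)
    (x : Fin d → ℝ) : Fin d → Fin d → ℝ :=
  effectiveStress ν (muof ν κ) (hfun ε γ (R x)) (gfun ε γ (R x)) (jac W x)

/-- Solutions of the system satisfied by the density and the effective velocity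
`w = u + μ ∇φ_ε(ρ)` of a solution of (QNS_ε): the capillarity and the pressure `p_ε` are absorbed
into the viscous stress and the damping of `w`. The field `drift` encodes `w - u = μ ∇φ_ε(ρ)`
without `φ_ε`. -/
structure IsEffectiveSol (ε γ ν κ T : ℝ) (ρ : ℝ → (Fin d → ℝ) → ℝ)
    (u w : ℝ → (Fin d → ℝ) → Fin d → ℝ) : Prop extends IsContinuitySol T ρ u where
  smooth_effective : SmoothOnSlab T w
  periodic_effective : ∀ t, SpacePeriodic (w t)
  drift : ∀ t ∈ Icc 0 T, ∀ x i,
    ρ t x * (w t x i - u t x i) = muof ν κ * deriv (hfun ε γ) (ρ t x) * pd i (ρ t) x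
  momentum : ∀ t ∈ Ioo 0 T, ∀ x i,
    ρ t x * (deriv (fun s => w s x i) t + ∑ j, u t x j * jac (w t) x i j)
        + grad (fun y => ρ t y ^ γ) x i + ptil ε (ρ t x) * w t x i =
      dvgM (stressField ε γ ν κ (ρ t) (w t)) x i

lemma IsQNSSol.isContinuitySol (hsol : IsQNSSol d ε γ ν κ T P ρ u) : IsContinuitySol T ρ u := by
  obtain ⟨hρ, hu, hpos, hρper, huper, hcont, -⟩ := hsol
  exact ⟨hρ, hu, hpos, hρper, huper, hcont⟩

lemma IsQNSSol.momentum_eq (hsol : IsQNSSol d ε γ ν κ T P ρ u) (hP : IsPeps ε γ ν κ P)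
    (hΦ : IsPhieps ε γ Φ) (ht : t ∈ Ioo 0 T) (x : Fin d → ℝ) (i : Fin d) :
    ρ t x * (deriv (fun s => u s x i) t + ∑ j, u t x j * jac (u t) x i j)
        + grad (fun y => ρ t y ^ γ) x i
        + ptil ε (ρ t x) * (u t x i + muof ν κ * grad (fun y => Φ (ρ t y)) x i) =
      ν * dvgM (fun y => viscousTensor (hfun ε γ (ρ t y)) (gfun ε γ (ρ t y)) (jac (u t) y)) x i
        + ν * dvgM (fun y i j => viscousTensor (hfun ε γ (ρ t y)) (gfun ε γ (ρ t y))
            (jac (u t) y) j i) x i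
        + κ ^ 2 * dvgM (fun y i j => viscousTensor (hfun ε γ (ρ t y)) (gfun ε γ (ρ t y))
            (jac (grad fun z => Φ (ρ t z)) y) j i) x i := by
  have h := hsol.isContinuitySol
  have hρ := h.contDiff_density ht
  have hpos := h.density_pos t
  have hpower : HasDerivAt (fun r : ℝ => r ^ γ) (γ * ρ t x ^ (γ - 1)) (ρ t x) :=
    hasDerivAt_rpow_const (.inl (hpos x).ne')
  have hpressure : grad (fun y => ρ t y ^ γ + P (ρ t y)) x i =
      grad (fun y => ρ t y ^ γ) x i
        + muof ν κ * ptil ε (ρ t x) * grad (fun y => Φ (ρ t y)) x i := by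
    simp only [grad]
    rw [pd_comp (hpower.fun_add (hP _ (hpos x))) (by fun_prop), pd_comp hpower (by fun_prop),
      pd_comp (hΦ.hasDerivAt (hpos x)) (by fun_prop)]
    ring
  have htransport : deriv (fun s => ρ s x * u s x i) t
      + dvgM (fun y i j => ρ t y * u t y i * u t y j) x i =
        ρ t x * (deriv (fun s => u s x i) t + ∑ j, u t x j * jac (u t) x i j) :=
    h.deriv_mul_add_dvg (h.smooth_velocity.eval i) ht x
  have hviscous := viscous_term_eq (x := x) (h.contDiff_hfun (ε := ε) (γ := γ) ht)
    (h.contDiff_gfun (ε := ε) (γ := γ) ht) (h.contDiff_velocity ht) ν i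
  obtain ⟨-, -, -, -, -, -, hmomentum⟩ := hsol
  linear_combination hmomentum t ht x i - htransport + hviscous
    + κ ^ 2 * two_mul_Kvec_eq (γ := γ) hΦ hρ hpos x i - hpressure

lemma IsQNSSol.isEffectiveSol (hκ : 0 < κ) (hνκ : κ < ν) (hT : 0 < T)
    (hsol : IsQNSSol d ε γ ν κ T P ρ u) (hP : IsPeps ε γ ν κ P) (hΦ : IsPhieps ε γ Φ) :
    IsEffectiveSol ε γ ν κ T ρ u
      (fun t x i => u t x i + muof ν κ * grad (fun y => Φ (ρ t y)) x i) := by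
  have h := hsol.isContinuitySol
  have hVsmooth (i : Fin d) : SmoothOnSlab T fun t x => grad (fun y => Φ (ρ t y)) x i :=
    (h.smooth_density.comp_pos h.density_pos hΦ.1).pd hT i
  refine { h with smooth_effective := ?_, periodic_effective := ?_, drift := ?_, momentum := ?_ }
  · exact contDiffOn_pi.2 fun i => ContDiffOn.add (h.smooth_velocity.eval i)
      (contDiffOn_const.mul (hVsmooth i))
  · intro t x n
    have hΦρ : SpacePeriodic fun y => Φ (ρ t y) := fun y m =>
      congrArg Φ (h.periodic_density t y m)
    funext i
    exact congrArg₂ (· + muof ν κ * ·) (congrFun (h.periodic_velocity t x n) i) (hΦρ.pd i x n)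
  · intro t ht x i
    linear_combination muof ν κ *
      hΦ.mul_grad_comp (h.smooth_density.contDiff ht) (h.density_pos t) x i
  · intro t ht x i
    have hu := h.contDiff_velocity ht
    have hΦρ := hΦ.contDiff_comp (h.contDiff_density ht) (h.density_pos t)
    have htime : deriv (fun s => u s x i + muof ν κ * grad (fun y => Φ (ρ s y)) x i) t =
        deriv (fun s => u s x i) t
          + muof ν κ * deriv (fun s => grad (fun y => Φ (ρ s y)) x i) t :=
      (((h.smooth_velocity.eval i).hasDerivAt ht x).add
        (((hVsmooth i).hasDerivAt ht x).const_mul _)).deriv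
    unfold stressField
    rw [htime, dvgM_effectiveStress (muof_mul hκ hνκ) (h.contDiff_hfun ht) (h.contDiff_gfun ht) hu
      (contDiff_grad hΦρ) fun y => jac_grad_comm hΦρ]
    simp only [jac_add_const_mul hu (contDiff_grad hΦρ), mul_add, Finset.sum_add_distrib,
      mul_left_comm _ (muof ν κ), ← Finset.mul_sum]
    linear_combination hsol.momentum_eq hP hΦ ht x i + muof ν κ * h.mul_deriv_drift hΦ ht x i

end EffectiveSystem

section Coercivity

variable {d : ℕ} {A B X : Fin d → Fin d → ℝ} {ν μ h g γ : ℝ}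

/-- The Frobenius inner product `A : B` of two square matrices. -/
def frobInner (A B : Fin d → Fin d → ℝ) : ℝ := ∑ i, ∑ j, A i j * B i j

lemma frobInner_self_nonneg : 0 ≤ frobInner A A :=
  Finset.sum_nonneg fun _ _ => Finset.sum_nonneg fun _ _ => mul_self_nonneg _

lemma frobInner_transpose : frobInner (fun i j => A j i) (fun i j => B j i) = frobInner A B :=
  Finset.sum_comm

lemma sq_frobInner_le : frobInner A B ^ 2 ≤ frobInner A A * frobInner B B := by
  simp only [frobInner, ← Fintype.sum_prod_type', ← sq]
  exact Finset.sum_mul_sq_le_sq_mul_sq _ _ _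

lemma abs_frobInner_le (hX : frobInner X X ≤ 4 * frobInner A A) :
    |frobInner A X| ≤ 2 * frobInner A A := by
  refine abs_le_of_sq_le_sq (sq_frobInner_le.trans ?_)
    (mul_nonneg zero_le_two frobInner_self_nonneg)
  nlinarith [frobInner_self_nonneg (A := A)]

lemma abs_frobInner_transpose_self_le : |frobInner (fun i j => A j i) A| ≤ frobInner A A := by
  refine abs_le_of_sq_le_sq (sq_frobInner_le.trans_eq ?_) frobInner_self_nonneg
  rw [frobInner_transpose, sq]

lemma sq_trace_le : (∑ i, A i i) ^ 2 ≤ d * frobInner A A :=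
  calc (∑ i, A i i) ^ 2
      ≤ d * ∑ i, A i i ^ 2 := by
        simpa using sq_sum_le_card_mul_sum_sq (s := Finset.univ) (f := fun i => A i i)
    _ ≤ d * frobInner A A := by
        refine mul_le_mul_of_nonneg_left (Finset.sum_le_sum fun i _ => ?_) d.cast_nonneg
        rw [sq]
        exact Finset.single_le_sum (f := fun j => A i j * A i j) (fun j _ => mul_self_nonneg _)
          (Finset.mem_univ i)

lemma sq_trace_le_symmetric_part :
    (∑ i, A i i) ^ 2 ≤ d / 2 * (frobInner A A + frobInner (fun i j => A j i) A) := by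
  have hsymm : frobInner (fun i j => (A i j + A j i) / 2) (fun i j => (A i j + A j i) / 2) =
      1 / 2 * (frobInner A A + frobInner (fun i j => A j i) A) := by
    have htranspose := frobInner_transpose (A := A) (B := A)
    suffices frobInner (fun i j => (A i j + A j i) / 2) (fun i j => (A i j + A j i) / 2) =
        1 / 4 * (frobInner A A + frobInner (fun i j => A j i) fun i j => A j i)
          + 1 / 2 * frobInner (fun i j => A j i) A by linarith
    simp only [frobInner, Finset.mul_sum, ← Finset.sum_add_distrib]
    refine Finset.sum_congr rfl fun i _ => Finset.sum_congr rfl fun j _ => ?_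
    ring
  have htrace := sq_trace_le (A := fun i j => (A i j + A j i) / 2)
  simp only [add_self_div_two] at htrace
  rw [hsymm] at htrace
  linarith

lemma frobInner_effectiveStress :
    frobInner (effectiveStress ν μ h g A) B =
      h * (ν * frobInner A B + (ν - μ) * frobInner (fun i j => A j i) B)
        + (2 * ν - μ) * g * ((∑ i, A i i) * ∑ i, B i i) := by
  have hterm (i j : Fin d) : effectiveStress ν μ h g A i j * B i j =
      h * (ν * (A i j * B i j) + (ν - μ) * (A j i * B i j))
        + if i = j then (2 * ν - μ) * g * ((∑ k, A k k) * B i j) else 0 := by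
    simp only [effectiveStress, viscousTensor, eq_comm (a := j)]
    split_ifs <;> ring
  simp only [frobInner, hterm, Finset.sum_add_distrib, Finset.sum_ite_eq, Finset.mem_univ, if_true,
    ← Finset.mul_sum]

/- With `a = |A|²` and `b = A : Aᵀ`, the bounds `g ≥ -h/8` and `(tr A)² ≤ 7/2 (a + b)` leave
`h ((ν - μ/2) (a + b) / 8 + (μ/2) (a - b))`, and `|b| ≤ a`. -/
lemma mul_frobInner_self_le_frobInner_effectiveStress (hd : d < 8) (hμ : 0 ≤ μ) (hμν : μ ≤ ν)
    (hh : 0 ≤ h) (hg : -(h / 8) ≤ g) :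
    μ / 8 * h * frobInner A A ≤ frobInner (effectiveStress ν μ h g A) A := by
  obtain ⟨hb_lower, hb_upper⟩ := abs_le.1 (abs_frobInner_transpose_self_le (A := A))
  have htrace := sq_trace_le_symmetric_part (A := A)
  rw [frobInner_effectiveStress, ← sq]
  set a := frobInner A A
  set b := frobInner (fun i j => A j i) A
  have hd7 : (d : ℝ) ≤ 7 := by exact_mod_cast Nat.le_of_lt_succ hd
  have htrace7 : (∑ i, A i i) ^ 2 ≤ 7 / 2 * (a + b) := htrace.trans (by gcongr; linarith)
  have hbulk : -(h / 8) * (7 / 2 * (a + b)) ≤ g * (∑ i, A i i) ^ 2 :=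
    calc -(h / 8) * (7 / 2 * (a + b)) ≤ -(h / 8) * (∑ i, A i i) ^ 2 :=
          mul_le_mul_of_nonpos_left htrace7 (by linarith)
      _ ≤ g * (∑ i, A i i) ^ 2 := by gcongr
  calc μ / 8 * h * a
      ≤ h * ((ν - μ / 2) / 8 * (a + b) + μ / 2 * (a - b)) := by
        have hsplit : μ / 2 / 8 * (a + b) ≤ (ν - μ / 2) / 8 * (a + b) := by
          gcongr <;> linarith
        nlinarith [mul_nonneg hμ (sub_nonneg.2 hb_upper)]
    _ = h * (ν * a + (ν - μ) * b) + (2 * ν - μ) * (-(h / 8) * (7 / 2 * (a + b))) := by ring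
    _ ≤ h * (ν * a + (ν - μ) * b) + (2 * ν - μ) * (g * (∑ i, A i i) ^ 2) := by
        gcongr
        linarith
    _ = h * (ν * a + (ν - μ) * b) + (2 * ν - μ) * g * (∑ i, A i i) ^ 2 := by ring

lemma abs_frobInner_effectiveStress_le (hμ : 0 ≤ μ) (hμν : μ ≤ ν) (hh : 0 ≤ h)
    (hg : |g| ≤ γ * h) (hX : frobInner X X ≤ 4 * frobInner A A) :
    |frobInner (effectiveStress ν μ h g A) X| ≤ 4 * ν * (1 + d * γ) * h * frobInner A A := by
  have hAX := abs_frobInner_le hX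
  have hAtX : |frobInner (fun i j => A j i) X| ≤ 2 * frobInner A A := by
    rw [← frobInner_transpose (A := A) (B := A)]
    exact abs_frobInner_le (hX.trans_eq (by rw [frobInner_transpose]))
  have htraces : |(∑ i, A i i) * ∑ i, X i i| ≤ 2 * (d * frobInner A A) := by
    have hnonneg : 0 ≤ d * frobInner A A := mul_nonneg d.cast_nonneg frobInner_self_nonneg
    refine abs_le_of_sq_le_sq ?_ (by linarith)
    calc ((∑ i, A i i) * ∑ i, X i i) ^ 2 = (∑ i, A i i) ^ 2 * (∑ i, X i i) ^ 2 := mul_pow _ _ 2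
      _ ≤ (d * frobInner A A) * (d * (4 * frobInner A A)) := by
          gcongr
          · exact sq_trace_le
          · exact sq_trace_le.trans (by gcongr)
      _ = (2 * (d * frobInner A A)) ^ 2 := by ring
  rw [frobInner_effectiveStress]
  set a := frobInner A A
  have ha : 0 ≤ a := frobInner_self_nonneg
  have hγh : 0 ≤ γ * h := (abs_nonneg g).trans hg
  have hνμ : 0 ≤ ν - μ := by linarith
  have hν : 0 ≤ ν := hμ.trans hμν
  have h2νμ : 0 ≤ 2 * ν - μ := by linarith
  calc |h * (ν * frobInner A X + (ν - μ) * frobInner (fun i j => A j i) X)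
        + (2 * ν - μ) * g * ((∑ i, A i i) * ∑ i, X i i)|
      ≤ h * (ν * |frobInner A X| + (ν - μ) * |frobInner (fun i j => A j i) X|)
        + (2 * ν - μ) * |g| * |(∑ i, A i i) * ∑ i, X i i| := by
        refine (abs_add_le _ _).trans (add_le_add ?_ ?_)
        · rw [abs_mul, abs_of_nonneg hh]
          refine mul_le_mul_of_nonneg_left ((abs_add_le _ _).trans_eq ?_) hh
          rw [abs_mul, abs_mul, abs_of_nonneg hν, abs_of_nonneg hνμ]
        · rw [abs_mul, abs_mul, abs_of_nonneg h2νμ]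
    _ ≤ h * (ν * (2 * a) + (ν - μ) * (2 * a)) + (2 * ν - μ) * (γ * h) * (2 * (d * a)) := by
        gcongr
    _ = (2 * ν - μ) * (2 * (h + d * (γ * h)) * a) := by ring
    _ ≤ 2 * ν * (2 * (h + d * (γ * h)) * a) := by
        gcongr
        linarith
    _ = 4 * ν * (1 + d * γ) * h * a := by ring

lemma sq_trace_add_mul_trace_le {δ : ℝ} (hδ : 0 ≤ δ) (hδ1 : δ ≤ 1)
    (hX : frobInner X X ≤ 4 * frobInner A A) :
    (∑ i, A i i + δ * ∑ i, X i i) ^ 2 ≤ 10 * d * frobInner A A := by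
  have htraceX : (δ * ∑ i, X i i) ^ 2 ≤ 4 * d * frobInner A A :=
    calc (δ * ∑ i, X i i) ^ 2 = δ ^ 2 * (∑ i, X i i) ^ 2 := mul_pow _ _ 2
      _ ≤ 1 * (d * (4 * frobInner A A)) := by
          gcongr
          · exact pow_le_one₀ hδ hδ1
          · exact sq_trace_le.trans (by gcongr)
      _ = 4 * d * frobInner A A := by ring
  linarith [add_sq_le (a := ∑ i, A i i) (b := δ * ∑ i, X i i), sq_trace_le (A := A)]

/- The loss of coercivity is at most `δ · 4ν (1 + dγ) h |A|² ≤ (μ/16) h |A|²`. -/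
lemma mul_frobInner_self_le_frobInner_effectiveStress_add {δ : ℝ} (hd : d < 8) (hμ : 0 ≤ μ)
    (hμν : μ ≤ ν) (hγ : 1 ≤ γ) (hh : 0 ≤ h) (hg : -(h / 8) ≤ g) (hg' : g ≤ γ * h) (hδ : 0 ≤ δ)
    (hδμ : δ * (512 * ν * γ) ≤ μ) (hX : frobInner X X ≤ 4 * frobInner A A) :
    μ / 16 * h * frobInner A A ≤
      frobInner (effectiveStress ν μ h g A) A + δ * frobInner (effectiveStress ν μ h g A) X := by
  have ha : 0 ≤ frobInner A A := frobInner_self_nonneg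
  have hd7 : (d : ℝ) ≤ 7 := by exact_mod_cast Nat.le_of_lt_succ hd
  have hν : 0 ≤ ν := hμ.trans hμν
  have hcoercive := mul_frobInner_self_le_frobInner_effectiveStress (A := A) hd hμ hμν hh hg
  have hloss : -(μ / 16 * h * frobInner A A) ≤ δ * frobInner (effectiveStress ν μ h g A) X := by
    rw [neg_le]
    calc -(δ * frobInner (effectiveStress ν μ h g A) X)
        = δ * -frobInner (effectiveStress ν μ h g A) X := by ring
      _ ≤ δ * (4 * ν * (1 + d * γ) * h * frobInner A A) := by
          gcongr
          exact (neg_le_abs _).trans <|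
            abs_frobInner_effectiveStress_le hμ hμν hh (abs_le.2 ⟨by nlinarith, hg'⟩) hX
      _ ≤ δ * (4 * ν * (γ + 7 * γ) * h * frobInner A A) := by gcongr
      _ = δ * (512 * ν * γ) / 16 * h * frobInner A A := by ring
      _ ≤ μ / 16 * h * frobInner A A := by gcongr
  linarith

lemma mul_trace_sub_frobInner_effectiveStress_le {δ p : ℝ} (hd : d < 8) (hμ : 0 < μ) (hμν : μ ≤ ν)
    (hγ : 1 ≤ γ) (hh : 0 < h) (hg : -(h / 8) ≤ g) (hg' : g ≤ γ * h) (hδ : 0 ≤ δ)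
    (hδμ : δ * (512 * ν * γ) ≤ μ) (hX : frobInner X X ≤ 4 * frobInner A A) :
    p * (∑ i, A i i + δ * ∑ i, X i i)
        - (frobInner (effectiveStress ν μ h g A) A
          + δ * frobInner (effectiveStress ν μ h g A) X) ≤
      280 / μ * (p ^ 2 / h) := by
  have hcoercive :=
    mul_frobInner_self_le_frobInner_effectiveStress_add hd hμ.le hμν hγ hh.le hg hg' hδ hδμ hX
  have hd7 : (d : ℝ) ≤ 7 := by exact_mod_cast Nat.le_of_lt_succ hd
  have hδ1 : δ ≤ 1 := by
    have : ν ≤ ν * γ := le_mul_of_one_le_right (hμ.le.trans hμν) hγ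
    nlinarith
  have htrace : (∑ i, A i i + δ * ∑ i, X i i) ^ 2 ≤ 70 * frobInner A A := by
    nlinarith [sq_trace_add_mul_trace_le hδ hδ1 hX, frobInner_self_nonneg (A := A)]
  set τ := ∑ i, A i i + δ * ∑ i, X i i
  have hyoung : p * τ ≤ μ / 16 * h * (τ ^ 2 / 70) + 280 / μ * (p ^ 2 / h) := by
    have hsq : 0 ≤ (μ * h * τ - 560 * p) ^ 2 / (1120 * μ * h) := by positivity
    have hexpand : (μ * h * τ - 560 * p) ^ 2 / (1120 * μ * h) =
        μ / 16 * h * (τ ^ 2 / 70) + 280 / μ * (p ^ 2 / h) - p * τ := by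
      field_simp
      ring
    linarith
  have hτ : μ / 16 * h * (τ ^ 2 / 70) ≤ μ / 16 * h * frobInner A A := by
    gcongr
    linarith
  linarith

end Coercivity

section Energy

variable {d : ℕ} {δ : ℝ} {v : Fin d → ℝ} {A : Fin d → Fin d → ℝ}

/-- The kinetic energy per unit mass `(1 + |v|²)^(1+δ) / (2(1+δ))`; the shift by `1` makes it
smooth at `v = 0`. -/
def energyDensity (δ : ℝ) (v : Fin d → ℝ) : ℝ := (1 + ∑ i, v i ^ 2) ^ (1 + δ) / (2 * (1 + δ))

/-- The gradient `(1 + |v|²)^δ v` of `energyDensity δ`, the multiplier of the momentum equation. -/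
def energyGradient (δ : ℝ) (v : Fin d → ℝ) (i : Fin d) : ℝ := (1 + ∑ k, v k ^ 2) ^ δ * v i

/-- The tensor `X = 2 v ⊗ Aᵀv / (1 + |v|²)`: if `A` is the Jacobian of `v`, then the one of
`(1 + |v|²)^δ v` is `(1 + |v|²)^δ (A + δ X)`. -/
def stretchTensor (v : Fin d → ℝ) (A : Fin d → Fin d → ℝ) (i j : Fin d) : ℝ :=
  2 * v i * (∑ k, v k * A k j) / (1 + ∑ k, v k ^ 2)

lemma one_add_sum_sq_pos : 0 < 1 + ∑ i, v i ^ 2 := by positivity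

lemma energyDensity_nonneg (hδ : 0 ≤ δ) : 0 ≤ energyDensity δ v := by
  unfold energyDensity
  positivity

lemma contDiff_one_add_sum_sq_rpow (a : ℝ) :
    ContDiff ℝ ∞ fun v : Fin d → ℝ => (1 + ∑ i, v i ^ 2) ^ a :=
  ContDiff.rpow_const_of_ne (by fun_prop) fun _ => one_add_sum_sq_pos.ne'

lemma contDiff_energyDensity : ContDiff ℝ ∞ (energyDensity δ : (Fin d → ℝ) → ℝ) :=
  (contDiff_one_add_sum_sq_rpow _).div_const _

lemma contDiff_energyGradient : ContDiff ℝ ∞ (energyGradient δ : (Fin d → ℝ) → Fin d → ℝ) :=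
  contDiff_pi.2 fun i => (contDiff_one_add_sum_sq_rpow δ).mul (contDiff_apply ℝ ℝ i)

lemma hasFDerivAt_energyDensity (hδ : 0 ≤ δ) (v : Fin d → ℝ) :
    HasFDerivAt (energyDensity δ)
      (∑ i, energyGradient δ v i • ContinuousLinearMap.proj (R := ℝ) (φ := fun _ => ℝ) i) v := by
  have hsq : HasFDerivAt (fun v : Fin d → ℝ => 1 + ∑ i, v i ^ 2)
      (∑ i, (2 * v i) • ContinuousLinearMap.proj (R := ℝ) (φ := fun _ => ℝ) i) v := by
    refine (HasFDerivAt.fun_sum fun i _ => ?_).const_add 1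
    simpa using (ContinuousLinearMap.proj (R := ℝ) (φ := fun _ => ℝ) i).hasFDerivAt.pow 2
  refine ((hsq.rpow_const (.inl one_add_sum_sq_pos.ne')).mul_const
    (2 * (1 + δ))⁻¹).congr_fderiv ?_
  have hδ' : 1 + δ ≠ 0 := by positivity
  simp only [Finset.smul_sum, smul_smul, energyGradient, add_sub_cancel_left]
  exact Finset.sum_congr rfl fun i _ => by
    congr 1
    field_simp

lemma pow_le_mul_energyDensity (hδ : 0 ≤ δ) :
    (∑ i, v i ^ 2) ^ (1 + δ) ≤ 2 * (1 + δ) * energyDensity δ v := by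
  rw [energyDensity, mul_div_cancel₀ _ (by positivity)]
  gcongr
  linarith

lemma sum_energyGradient_mul_self :
    ∑ i, energyGradient δ v i * v i = (1 + ∑ i, v i ^ 2) ^ δ * ∑ i, v i ^ 2 := by
  simp only [energyGradient, Finset.mul_sum]
  exact Finset.sum_congr rfl fun i _ => by ring

@[simp]
lemma energyGradient_zero : energyGradient 0 v = v := by
  funext i
  simp [energyGradient]

lemma frobInner_stretchTensor_self_le :
    frobInner (stretchTensor v A) (stretchTensor v A) ≤ 4 * frobInner A A := by
  have hN : 0 < 1 + ∑ k, v k ^ 2 := one_add_sum_sq_pos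
  have hfactor : frobInner (stretchTensor v A) (stretchTensor v A) =
      4 * (∑ k, v k ^ 2) / (1 + ∑ k, v k ^ 2) ^ 2 * ∑ j, (∑ k, v k * A k j) ^ 2 := by
    simp only [frobInner, mul_div_assoc, Finset.sum_div, Finset.mul_sum, Finset.sum_mul]
    rw [Finset.sum_comm]
    refine Finset.sum_congr rfl fun j _ => Finset.sum_congr rfl fun i _ => ?_
    rw [stretchTensor]
    field_simp
    ring
  have hcauchy : ∑ j, (∑ k, v k * A k j) ^ 2 ≤ (∑ k, v k ^ 2) * frobInner A A := by
    rw [frobInner, Finset.sum_comm, Finset.mul_sum]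
    refine Finset.sum_le_sum fun j _ => ?_
    simp only [← sq]
    exact Finset.sum_mul_sq_le_sq_mul_sq _ _ _
  have hfraction : (∑ k, v k ^ 2) / (1 + ∑ k, v k ^ 2) ≤ 1 :=
    (div_le_one hN).2 (by linarith)
  rw [hfactor]
  set s := ∑ k, v k ^ 2
  calc 4 * s / (1 + s) ^ 2 * ∑ j, (∑ k, v k * A k j) ^ 2
      ≤ 4 * s / (1 + s) ^ 2 * (s * frobInner A A) := by gcongr
    _ = 4 * ((s / (1 + s)) ^ 2 * frobInner A A) := by
        rw [div_pow]
        ring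
    _ ≤ 4 * frobInner A A := by
        gcongr
        exact mul_le_of_le_one_left frobInner_self_nonneg (pow_le_one₀ (by positivity) hfraction)

section Fields

variable {W : (Fin d → ℝ) → Fin d → ℝ} {x : Fin d → ℝ}

lemma pd_energyDensity_comp (hδ : 0 ≤ δ) (hW : ContDiff ℝ ∞ W) (j : Fin d) :
    pd j (fun y => energyDensity δ (W y)) x = ∑ i, energyGradient δ (W x) i * jac W x i j := by
  have hcomp : fderiv ℝ (fun y => energyDensity δ (W y)) x = _ :=
    ((hasFDerivAt_energyDensity hδ (W x)).comp x
      (hasFDerivAt_pi.2 fun i => DifferentiableAt.hasFDerivAt (by fun_prop))).fderiv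
  simp [pd, jac, hcomp]

lemma jac_energyGradient_comp (hW : ContDiff ℝ ∞ W) (i j : Fin d) :
    jac (fun y => energyGradient δ (W y)) x i j =
      (1 + ∑ k, W x k ^ 2) ^ δ * (jac W x i j + δ * stretchTensor (W x) (jac W x) i j) := by
  have hpos : 0 < 1 + ∑ k, W x k ^ 2 := one_add_sum_sq_pos
  have hN : pd j (fun y => 1 + ∑ k, W y k ^ 2) x = 2 * ∑ k, W x k * jac W x k j := by
    rw [pd_add (by fun_prop) (by fun_prop), pd_sum_sq hW]
    simp [pd]
  have hNδ : pd j (fun y => (1 + ∑ k, W y k ^ 2) ^ δ) x = _ :=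
    pd_comp (f := fun y => 1 + ∑ k, W y k ^ 2) (hasDerivAt_rpow_const (.inl hpos.ne'))
      (by fun_prop) j
  have hNδ_diff : DifferentiableAt ℝ (fun y => (1 + ∑ k, W y k ^ 2) ^ δ) x :=
    ((contDiff_one_add_sum_sq_rpow δ).comp hW).differentiable (by simp) x
  simp only [jac, energyGradient]
  rw [pd_mul hNδ_diff (by fun_prop), hNδ, hN, rpow_sub_one hpos.ne']
  simp only [stretchTensor, jac]
  field_simp

lemma dvg_energyGradient_comp (hW : ContDiff ℝ ∞ W) :
    dvg (fun y => energyGradient δ (W y)) x = (1 + ∑ k, W x k ^ 2) ^ δ *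
      (∑ i, jac W x i i + δ * ∑ i, stretchTensor (W x) (jac W x) i i) := by
  rw [Finset.mul_sum, ← Finset.sum_add_distrib, Finset.mul_sum]
  exact Finset.sum_congr rfl fun i _ => jac_energyGradient_comp hW i i

lemma frobInner_jac_energyGradient_comp (S : Fin d → Fin d → ℝ) (hW : ContDiff ℝ ∞ W) :
    frobInner S (jac (fun y => energyGradient δ (W y)) x) = (1 + ∑ k, W x k ^ 2) ^ δ *
      (frobInner S (jac W x) + δ * frobInner S (stretchTensor (W x) (jac W x))) := by
  simp only [frobInner, jac_energyGradient_comp hW, Finset.mul_sum, ← Finset.sum_add_distrib]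
  exact Finset.sum_congr rfl fun i _ => Finset.sum_congr rfl fun j _ => by ring

lemma dvg_contract {S : (Fin d → ℝ) → Fin d → Fin d → ℝ} {Z : (Fin d → ℝ) → Fin d → ℝ}
    (hS : ContDiff ℝ ∞ S) (hZ : ContDiff ℝ ∞ Z) :
    dvg (fun y j => ∑ i, S y i j * Z y i) x =
      ∑ i, Z x i * dvgM S x i + frobInner (S x) (jac Z x) := by
  have hterm (j : Fin d) : pd j (fun y => ∑ i, S y i j * Z y i) x =
      ∑ i, (Z x i * pd j (fun y => S y i j) x + S x i j * jac Z x i j) := by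
    rw [pd_sum (F := fun i y => S y i j * Z y i) fun i _ => by fun_prop]
    refine Finset.sum_congr rfl fun i _ => ?_
    rw [pd_mul (by fun_prop) (by fun_prop), jac]
    ring
  simp only [dvg, hterm, frobInner, dvgM, Finset.mul_sum, ← Finset.sum_add_distrib]
  exact Finset.sum_comm

end Fields

/- If the damping does not absorb the source then `s ≤ M / c`. -/
lemma rpow_mul_sub_le {c δ M p q s : ℝ} (hc : 0 < c) (hδ : 0 ≤ δ) (hM : 0 ≤ M) (hp : 0 < p)
    (hcp : c * p ≤ q) (hs : 0 ≤ s) :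
    (1 + s) ^ δ * (M * p - q * s) ≤ M * (1 + M / c) ^ δ * p := by
  rcases le_total (M * p) (q * s) with habsorbed | hsource
  · exact (mul_nonpos_of_nonneg_of_nonpos (by positivity) (by linarith)).trans (by positivity)
  · have hsM : s ≤ M / c := by
      rw [le_div_iff₀ hc]
      refine le_of_mul_le_mul_right ?_ hp
      calc s * c * p = c * p * s := by ring
        _ ≤ q * s := by gcongr
        _ ≤ M * p := hsource
    have hq : 0 ≤ q := (mul_pos hc hp).le.trans hcp
    calc (1 + s) ^ δ * (M * p - q * s) ≤ (1 + s) ^ δ * (M * p) := by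
          gcongr
          exact sub_le_self _ (mul_nonneg hq hs)
      _ ≤ (1 + M / c) ^ δ * (M * p) := by gcongr
      _ = M * (1 + M / c) ^ δ * p := by ring

end Energy

section EnergyEstimates

variable {d : ℕ} {ε γ ν κ T t δ : ℝ} {ρ : ℝ → (Fin d → ℝ) → ℝ} {u w : ℝ → (Fin d → ℝ) → Fin d → ℝ}

/-- The energy flux `Sᵀ Z - R ψ U` of the density `R ψ(W)`, where `ψ = energyDensity δ` and
`Z = energyGradient δ W`. -/
def energyFlux (δ : ℝ) (S : (Fin d → ℝ) → Fin d → Fin d → ℝ) (R : (Fin d → ℝ) → ℝ)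
    (U W : (Fin d → ℝ) → Fin d → ℝ) (x : Fin d → ℝ) (j : Fin d) : ℝ :=
  ∑ i, S x i j * energyGradient δ (W x) i - R x * energyDensity δ (W x) * U x j

lemma mul_dvg_sub_frobInner_stressField_le {R : (Fin d → ℝ) → ℝ} {W : (Fin d → ℝ) → Fin d → ℝ}
    {x : Fin d → ℝ} (p : ℝ) (hd : d < 8) (hκ : 0 < κ) (hνκ : κ < ν) (hγ : 1 ≤ γ) (hδ : 0 ≤ δ)
    (hδμ : δ * (512 * ν * γ) ≤ muof ν κ) (hε : 0 ≤ ε) (hR : 0 < R x) (hW : ContDiff ℝ ∞ W) :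
    p * dvg (fun y => energyGradient δ (W y)) x
        - frobInner (stressField ε γ ν κ R W x) (jac (fun y => energyGradient δ (W y)) x) ≤
      (1 + ∑ i, W x i ^ 2) ^ δ * (280 / muof ν κ * (p ^ 2 / hfun ε γ (R x))) := by
  rw [dvg_energyGradient_comp hW, frobInner_jac_energyGradient_comp _ hW, mul_left_comm,
    ← mul_sub]
  gcongr
  exact mul_trace_sub_frobInner_effectiveStress_le hd (muof_pos hκ hνκ) muof_le hγ
    (hfun_pos hε hR) (neg_hfun_div_le_gfun hε hγ hR) (gfun_le_mul_hfun hε hγ hR) hδ hδμ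
    frobInner_stretchTensor_self_le

/-- The constant `M = M₀ (1 + M₀ / λ(ε))^δ`, with `M₀ = 280 / (μ ε)`, such that `M ρ^γ` bounds the
production of the energy `ρ ψ_δ(w)`. -/
def energyProduction (ε ν κ δ : ℝ) : ℝ :=
  280 / (muof ν κ * ε) * (1 + 280 / (muof ν κ * ε) / lamfun ε) ^ δ

lemma rpow_mul_sub_ptil_le {r s : ℝ} (hκ : 0 < κ) (hνκ : κ < ν) (hγ : 1 ≤ γ) (hδ : 0 ≤ δ)
    (hε : 0 < ε) (hεγ : ε * γ ≤ 1) (hr : 0 < r) (hs : 0 ≤ s) :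
    (1 + s) ^ δ * (280 / muof ν κ * ((r ^ γ) ^ 2 / hfun ε γ r) - ptil ε r * s) ≤
      energyProduction ε ν κ δ * r ^ γ := by
  have hμ : 0 < muof ν κ := muof_pos hκ hνκ
  have hε1 : ε ≤ 1 := (le_mul_of_one_le_right hε.le hγ).trans hεγ
  have hsource : 280 / muof ν κ * ((r ^ γ) ^ 2 / hfun ε γ r) ≤ 280 / (muof ν κ * ε) * r ^ γ :=
    calc 280 / muof ν κ * ((r ^ γ) ^ 2 / hfun ε γ r)
        ≤ 280 / muof ν κ * ((r ^ γ) ^ 2 / (ε * r ^ γ)) := by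
          gcongr
          exact mul_rpow_le_hfun hε.le hr.le
      _ = 280 / (muof ν κ * ε) * r ^ γ := by field_simp
  calc (1 + s) ^ δ * (280 / muof ν κ * ((r ^ γ) ^ 2 / hfun ε γ r) - ptil ε r * s)
      ≤ (1 + s) ^ δ * (280 / (muof ν κ * ε) * r ^ γ - ptil ε r * s) := by gcongr
    _ ≤ energyProduction ε ν κ δ * r ^ γ :=
        rpow_mul_sub_le (exp_pos _) hδ (by positivity) (rpow_pos_of_pos hr γ)
          (lamfun_mul_rpow_le_ptil hε hε1 (by linarith) hεγ hr) hs

/-- The energy `∫ ρ (1 + |w|²) / 2 + ρ^γ / (γ - 1)` of a density `R` and an effective velocity `W`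
on the torus. -/
def totalEnergy (γ : ℝ) (R : (Fin d → ℝ) → ℝ) (W : (Fin d → ℝ) → Fin d → ℝ) : ℝ :=
  ∫ x in unitBox d, (R x * energyDensity 0 (W x) + R x ^ γ / (γ - 1))

/-- The effective velocity `U + μ h_ε'(R) ∇R / R` of a density `R` and a velocity `U`: this is
`U + μ ∇φ_ε(R)` for every admissible choice of `φ_ε`. -/
def effectiveVelocity (ε γ ν κ : ℝ) (R : (Fin d → ℝ) → ℝ) (U : (Fin d → ℝ) → Fin d → ℝ)
    (x : Fin d → ℝ) (i : Fin d) : ℝ :=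
  U x i + muof ν κ * deriv (hfun ε γ) (R x) * pd i R x / R x

namespace IsEffectiveSol

variable (h : IsEffectiveSol ε γ ν κ T ρ u w)
include h

lemma contDiff_effective (ht : t ∈ Ioo 0 T) : ContDiff ℝ ∞ (w t) :=
  h.smooth_effective.contDiff (Ioo_subset_Icc_self ht)

lemma contDiff_rpow_density (ht : t ∈ Ioo 0 T) : ContDiff ℝ ∞ fun x => ρ t x ^ γ :=
  (h.contDiff_density ht).rpow_const_of_ne fun x => (h.density_pos t x).ne'

lemma contDiff_energyGradient (ht : t ∈ Ioo 0 T) :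
    ContDiff ℝ ∞ fun x => energyGradient δ (w t x) :=
  _root_.contDiff_energyGradient.comp (h.contDiff_effective ht)

lemma contDiff_stressField (ht : t ∈ Ioo 0 T) :
    ContDiff ℝ ∞ (stressField ε γ ν κ (ρ t) (w t)) :=
  contDiff_effectiveStress (h.contDiff_hfun ht) (h.contDiff_gfun ht)
    (contDiff_jac (h.contDiff_effective ht))

lemma contDiff_energyFlux (ht : t ∈ Ioo 0 T) :
    ContDiff ℝ ∞ (energyFlux δ (stressField ε γ ν κ (ρ t) (w t)) (ρ t) (u t) (w t)) := by
  have hρ := h.contDiff_density ht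
  have hu := h.contDiff_velocity ht
  have hS := h.contDiff_stressField ht
  have hZ := h.contDiff_energyGradient (δ := δ) ht
  have hψ : ContDiff ℝ ∞ fun x => energyDensity δ (w t x) :=
    contDiff_energyDensity.comp (h.contDiff_effective ht)
  unfold energyFlux
  fun_prop

lemma periodic_energyFlux :
    SpacePeriodic (energyFlux δ (stressField ε γ ν κ (ρ t) (w t)) (ρ t) (u t) (w t)) := by
  intro x n
  have hjac : jac (w t) (x + fun i => (n i : ℝ)) = jac (w t) x :=
    funext₂ fun i j =>
      SpacePeriodic.pd (fun y m => congrFun (h.periodic_effective t y m) i) j x n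
  unfold energyFlux stressField
  rw [h.periodic_density t x n, h.periodic_velocity t x n, h.periodic_effective t x n, hjac]

lemma smoothOnSlab_energyDensity : SmoothOnSlab T fun t x => energyDensity δ (w t x) :=
  contDiff_energyDensity.comp_contDiffOn h.smooth_effective

lemma smoothOnSlab_energy : SmoothOnSlab T fun t x => ρ t x * energyDensity δ (w t x) :=
  h.smooth_density.mul h.smoothOnSlab_energyDensity

lemma smoothOnSlab_internalEnergy : SmoothOnSlab T fun t x => ρ t x ^ γ / (γ - 1) :=
  h.smooth_density.comp_pos h.density_pos (φ := fun r => r ^ γ / (γ - 1))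
    ((contDiffOn_id.rpow_const_of_ne fun _ hr => ne_of_gt hr).div_const _)

lemma material_deriv_energyDensity (hδ : 0 ≤ δ) (ht : t ∈ Ioo 0 T) (x : Fin d → ℝ) :
    deriv (fun s => energyDensity δ (w s x)) t
        + ∑ j, u t x j * pd j (fun y => energyDensity δ (w t y)) x =
      ∑ i, energyGradient δ (w t x) i *
        (deriv (fun s => w s x i) t + ∑ j, u t x j * jac (w t) x i j) := by
  have htime : HasDerivAt (fun s => energyDensity δ (w s x)) _ t :=
    (hasFDerivAt_energyDensity hδ (w t x)).comp_hasDerivAt (f := fun s => w s x) t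
      (hasDerivAt_pi.2 fun i => (h.smooth_effective.eval i).hasDerivAt ht x)
  simp only [htime.deriv, pd_energyDensity_comp hδ (h.contDiff_effective ht),
    sum_apply, smul_apply, ContinuousLinearMap.proj_apply, smul_eq_mul, mul_add,
    Finset.sum_add_distrib, Finset.mul_sum]
  rw [Finset.sum_comm (s := Finset.univ) (t := Finset.univ)]
  simp only [mul_left_comm]

lemma deriv_energy (hδ : 0 ≤ δ) (ht : t ∈ Ioo 0 T) (x : Fin d → ℝ) :
    deriv (fun s => ρ s x * energyDensity δ (w s x)) t =
      dvg (energyFlux δ (stressField ε γ ν κ (ρ t) (w t)) (ρ t) (u t) (w t)) x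
        - frobInner (stressField ε γ ν κ (ρ t) (w t) x)
            (jac (fun y => energyGradient δ (w t y)) x)
        - ∑ i, energyGradient δ (w t x) i * grad (fun y => ρ t y ^ γ) x i
        - ptil ε (ρ t x) * ∑ i, energyGradient δ (w t x) i * w t x i := by
  have hρ := h.contDiff_density ht
  have hu := h.contDiff_velocity ht
  have hS := h.contDiff_stressField ht
  have hZ := h.contDiff_energyGradient (δ := δ) ht
  have hψ : ContDiff ℝ ∞ fun x => energyDensity δ (w t x) :=
    h.smoothOnSlab_energyDensity.contDiff (Ioo_subset_Icc_self ht)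
  have hmomentum : ρ t x * ∑ i, energyGradient δ (w t x) i *
      (deriv (fun s => w s x i) t + ∑ j, u t x j * jac (w t) x i j) =
        ∑ i, energyGradient δ (w t x) i * dvgM (stressField ε γ ν κ (ρ t) (w t)) x i
          - ∑ i, energyGradient δ (w t x) i * grad (fun y => ρ t y ^ γ) x i
          - ptil ε (ρ t x) * ∑ i, energyGradient δ (w t x) i * w t x i := by
    simp only [Finset.mul_sum, ← Finset.sum_sub_distrib]
    exact Finset.sum_congr rfl fun i _ => by
      linear_combination energyGradient δ (w t x) i * h.momentum t ht x i
  have htransport := h.deriv_mul_add_dvg (h.smoothOnSlab_energyDensity (δ := δ)) ht x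
  have hflux : dvg (energyFlux δ (stressField ε γ ν κ (ρ t) (w t)) (ρ t) (u t) (w t)) x = _ :=
    (dvg_sub (by fun_prop) (by fun_prop)).trans (congrArg (· - _) (dvg_contract hS hZ))
  rw [h.material_deriv_energyDensity hδ ht, hmomentum] at htransport
  linear_combination htransport - hflux

lemma exists_deriv_energy_le (hd : d < 8) (hκ : 0 < κ) (hνκ : κ < ν) (hγ : 1 ≤ γ) (hδ : 0 ≤ δ)
    (hδμ : δ * (512 * ν * γ) ≤ muof ν κ) (hε : 0 < ε) (hεγ : ε * γ ≤ 1) (ht : t ∈ Ioo 0 T) :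
    ∃ F : (Fin d → ℝ) → Fin d → ℝ, ContDiff ℝ ∞ F ∧ SpacePeriodic F ∧
      ∀ x, deriv (fun s => ρ s x * energyDensity δ (w s x)) t ≤
        dvg F x + energyProduction ε ν κ δ * ρ t x ^ γ := by
  have hw := h.contDiff_effective ht
  have hZ := h.contDiff_energyGradient (δ := δ) ht
  have hflux := h.contDiff_energyFlux (δ := δ) ht
  have hργ := h.contDiff_rpow_density ht
  refine ⟨fun x j => energyFlux δ (stressField ε γ ν κ (ρ t) (w t)) (ρ t) (u t) (w t) x j
      - (ρ t x ^ γ • energyGradient δ (w t x)) j, by fun_prop, fun x n => ?_, fun x => ?_⟩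
  · simp only [h.periodic_energyFlux x n, h.periodic_density t x n, h.periodic_effective t x n]
  · have hpos := h.density_pos t x
    have hpressure := dvg_smul (differentiableAt_of_contDiff_infty hργ (p := x))
      (differentiableAt_of_contDiff_infty hZ)
    have hviscous := mul_dvg_sub_frobInner_stressField_le (x := x) (R := ρ t) (ρ t x ^ γ) hd hκ hνκ
      hγ hδ hδμ hε.le hpos hw
    have hproduction := rpow_mul_sub_ptil_le (s := ∑ i, w t x i ^ 2) hκ hνκ hγ hδ hε hεγ hpos
      (by positivity)
    rw [dvg_sub (by fun_prop) (by fun_prop), hpressure, h.deriv_energy hδ ht,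
      sum_energyGradient_mul_self]
    simp only [grad] at hproduction ⊢
    linarith

lemma drift_mul_grad_nonneg (hκ : 0 < κ) (hνκ : κ < ν) (hγ : 0 ≤ γ) (hε : 0 ≤ ε)
    (ht : t ∈ Ioo 0 T) (x : Fin d → ℝ) :
    0 ≤ ∑ i, (w t x i - u t x i) * grad (fun y => ρ t y ^ γ) x i := by
  have hρ := h.contDiff_density ht
  have hpos := h.density_pos t x
  have hμ : 0 < muof ν κ := muof_pos hκ hνκ
  have hh' : 0 < deriv (hfun ε γ) (ρ t x) := deriv_hfun_pos hε hγ hpos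
  refine Finset.sum_nonneg fun i _ => nonneg_of_mul_nonneg_right ?_ hpos
  rw [← mul_assoc, h.drift t (Ioo_subset_Icc_self ht), grad,
    pd_comp (hasDerivAt_rpow_const (.inl hpos.ne')) (by fun_prop)]
  calc 0 ≤ muof ν κ * deriv (hfun ε γ) (ρ t x) * (γ * ρ t x ^ (γ - 1)) * pd i (ρ t) x ^ 2 := by
        positivity
    _ = _ := by ring

lemma deriv_internalEnergy (hγ : γ ≠ 1) (ht : t ∈ Ioo 0 T) (x : Fin d → ℝ) :
    deriv (fun s => ρ s x ^ γ / (γ - 1)) t =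
      ∑ i, u t x i * grad (fun y => ρ t y ^ γ) x i
        - dvg (fun y => (γ / (γ - 1) * ρ t y ^ γ) • u t y) x := by
  have hu := h.contDiff_velocity ht
  have hργ : DifferentiableAt ℝ (fun y => ρ t y ^ γ) x :=
    differentiableAt_of_contDiff_infty (h.contDiff_rpow_density ht)
  have hpos := h.density_pos t x
  have hγ' : γ - 1 ≠ 0 := sub_ne_zero.2 hγ
  rw [deriv_div_const,
    h.deriv_comp_density (φ := fun r => r ^ γ) ht (hasDerivAt_rpow_const (.inl hpos.ne')),
    dvg_smul (hργ.const_mul _) (by fun_prop)]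
  simp only [pd_const_mul hργ,
    mul_left_comm _ (γ / (γ - 1)), ← Finset.mul_sum, grad, rpow_sub_one hpos.ne']
  field_simp
  ring

lemma exists_deriv_totalEnergy_le (hd : d < 8) (hκ : 0 < κ) (hνκ : κ < ν) (hγ : 1 < γ)
    (hε : 0 ≤ ε) (ht : t ∈ Ioo 0 T) :
    ∃ F : (Fin d → ℝ) → Fin d → ℝ, ContDiff ℝ ∞ F ∧ SpacePeriodic F ∧
      ∀ x, deriv (fun s => ρ s x * energyDensity 0 (w s x) + ρ s x ^ γ / (γ - 1)) t ≤
        dvg F x := by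
  have hu := h.contDiff_velocity ht
  have hflux := h.contDiff_energyFlux (δ := 0) ht
  have hργ := h.contDiff_rpow_density ht
  refine ⟨fun x j => energyFlux 0 (stressField ε γ ν κ (ρ t) (w t)) (ρ t) (u t) (w t) x j
      - ((γ / (γ - 1) * ρ t x ^ γ) • u t x) j, by fun_prop, fun x n => ?_, fun x => ?_⟩
  · simp only [h.periodic_energyFlux x n, h.periodic_density t x n, h.periodic_velocity t x n]
  · have hpos := h.density_pos t x
    have hh := hfun_pos (γ := γ) hε hpos
    have hμ : 0 < muof ν κ := muof_pos hκ hνκ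
    have hviscous : 0 ≤ frobInner (stressField ε γ ν κ (ρ t) (w t) x) (jac (w t) x) :=
      (mul_nonneg (by positivity) frobInner_self_nonneg).trans
        (mul_frobInner_self_le_frobInner_effectiveStress hd hμ.le muof_le hh.le
          (neg_hfun_div_le_gfun hε hγ.le hpos))
    have hdamping : 0 ≤ ptil ε (ρ t x) * ∑ i, w t x i * w t x i :=
      mul_nonneg (by unfold ptil lamfun; positivity)
        (Finset.sum_nonneg fun i _ => mul_self_nonneg _)
    have hdrift := h.drift_mul_grad_nonneg hκ hνκ (by linarith) hε ht x
    have htime : deriv (fun s => ρ s x * energyDensity 0 (w s x) + ρ s x ^ γ / (γ - 1)) t =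
        deriv (fun s => ρ s x * energyDensity 0 (w s x)) t
          + deriv (fun s => ρ s x ^ γ / (γ - 1)) t :=
      (h.smoothOnSlab_energy.hasDerivAt ht x).add (h.smoothOnSlab_internalEnergy.hasDerivAt ht x)
        |>.deriv
    have hkinetic := h.deriv_energy le_rfl ht x
    simp only [energyGradient_zero] at hkinetic
    simp only [sub_mul, Finset.sum_sub_distrib] at hdrift
    rw [htime, hkinetic, h.deriv_internalEnergy hγ.ne' ht, dvg_sub (by fun_prop) (by fun_prop)]
    linarith

lemma integral_rpow_le (hd : d < 8) (hκ : 0 < κ) (hνκ : κ < ν) (hγ : 1 < γ) (hε : 0 ≤ ε)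
    (ht : t ∈ Icc 0 T) :
    ∫ x in unitBox d, ρ t x ^ γ ≤ (γ - 1) * totalEnergy γ (ρ 0) (w 0) := by
  have hγ' : 0 < γ - 1 := sub_pos.2 hγ
  have hsmooth : SmoothOnSlab T
      fun t x => ρ t x * energyDensity 0 (w t x) + ρ t x ^ γ / (γ - 1) :=
    h.smoothOnSlab_energy.add h.smoothOnSlab_internalEnergy
  have henergy : totalEnergy γ (ρ t) (w t) ≤ totalEnergy γ (ρ 0) (w 0) := by
    have := integral_le_add_mul_of_deriv_le_dvg (B := fun _ _ => 0) (K := 0)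
      (ht.1.trans ht.2) hsmooth (fun _ _ => continuous_const) (by simp)
      (by simpa using fun s hs => h.exists_deriv_totalEnergy_le hd hκ hνκ hγ hε hs) ht
    simpa [totalEnergy] using this
  rw [← div_le_iff₀' hγ', ← integral_div]
  refine (integral_mono
    (integrableOn_unitBox (h.smoothOnSlab_internalEnergy.contDiff ht).continuous)
    (integrableOn_unitBox (hsmooth.contDiff ht).continuous) fun x => ?_).trans henergy
  exact le_add_of_nonneg_left (mul_nonneg (h.density_pos t x).le (energyDensity_nonneg le_rfl))

lemma integral_mul_sum_sq_rpow_le (hd : d < 8) (hκ : 0 < κ) (hνκ : κ < ν) (hγ : 1 < γ)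
    (hδ : 0 ≤ δ) (hδμ : δ * (512 * ν * γ) ≤ muof ν κ) (hε : 0 < ε) (hεγ : ε * γ ≤ 1)
    (ht : t ∈ Icc 0 T) :
    ∫ x in unitBox d, ρ t x * (∑ i, w t x i ^ 2) ^ (1 + δ) ≤
      2 * (1 + δ) * ((∫ x in unitBox d, ρ 0 x * energyDensity δ (w 0 x))
        + energyProduction ε ν κ δ * ((γ - 1) * totalEnergy γ (ρ 0) (w 0)) * T) := by
  have hT : 0 ≤ T := ht.1.trans ht.2
  have hμ : 0 < muof ν κ := muof_pos hκ hνκ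
  have hM : 0 ≤ energyProduction ε ν κ δ := by
    unfold energyProduction lamfun
    positivity
  have hmass {s : ℝ} (hs : s ∈ Icc 0 T) :=
    h.integral_rpow_le hd hκ hνκ hγ hε.le hs
  have hE : 0 ≤ (γ - 1) * totalEnergy γ (ρ 0) (w 0) :=
    (integral_nonneg fun x => rpow_nonneg (h.density_pos t x).le γ).trans (hmass ht)
  have hρ := (h.smooth_density.contDiff ht).continuous
  have hw := (h.smooth_effective.contDiff ht).continuous
  have henergy := integral_le_add_mul_of_deriv_le_dvg hT (h.smoothOnSlab_energy (δ := δ))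
    (B := fun s x => energyProduction ε ν κ δ * ρ s x ^ γ)
    (fun s hs => (h.contDiff_rpow_density hs).continuous.const_mul _)
    (fun s hs => by
      rw [integral_const_mul]
      exact mul_le_mul_of_nonneg_left (hmass (Ioo_subset_Icc_self hs)) hM)
    (fun s hs => h.exists_deriv_energy_le hd hκ hνκ hγ.le hδ hδμ hε hεγ hs) ht
  calc ∫ x in unitBox d, ρ t x * (∑ i, w t x i ^ 2) ^ (1 + δ)
      ≤ ∫ x in unitBox d, 2 * (1 + δ) * (ρ t x * energyDensity δ (w t x)) := by
        refine integral_mono (integrableOn_unitBox ?_)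
          (integrableOn_unitBox ?_) fun x => ?_
        · exact hρ.mul (.rpow_const (by fun_prop) fun _ => .inr (by linarith))
        · exact (h.smoothOnSlab_energy.contDiff ht).continuous.const_mul _
        · rw [mul_left_comm]
          exact mul_le_mul_of_nonneg_left (pow_le_mul_energyDensity hδ) (h.density_pos t x).le
    _ = 2 * (1 + δ) * ∫ x in unitBox d, ρ t x * energyDensity δ (w t x) := integral_const_mul _ _
    _ ≤ _ := by
        gcongr
        exact henergy.trans (by gcongr; exact ht.2)

lemma effective_eq (ht : t ∈ Icc 0 T) : w t = effectiveVelocity ε γ ν κ (ρ t) (u t) := by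
  funext x i
  rw [effectiveVelocity, ← h.drift t ht, mul_div_cancel_left₀ _ (h.density_pos t x).ne']
  ring

end IsEffectiveSol

end EnergyEstimates

theorem statement16_general {d : ℕ} (hd : d < 8) (ν κ γ : ℝ) (hκ : 0 < κ) (hνκ : κ < ν)
    (hγ : 1 < γ) :
    ∃ δbar : ℝ, 0 < δbar ∧ ∃ εf : ℝ, 0 < εf ∧
      ∀ δ : ℝ, 0 ≤ δ → δ < δbar →
      ∀ ε : ℝ, 0 < ε → ε < εf →
      ∀ T : ℝ, 0 < T →
      ∀ (ρ0 : (Fin d → ℝ) → ℝ) (u0 : (Fin d → ℝ) → Fin d → ℝ),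
      ∃ C : ℝ,
        ∀ P Φ : ℝ → ℝ, IsPeps ε γ ν κ P → IsPhieps ε γ Φ →
        ∀ (ρ : ℝ → (Fin d → ℝ) → ℝ) (u : ℝ → (Fin d → ℝ) → Fin d → ℝ),
          IsQNSSol d ε γ ν κ T P ρ u → (∀ x, ρ 0 x = ρ0 x) → (∀ x, u 0 x = u0 x) →
        ∀ w : ℝ → (Fin d → ℝ) → Fin d → ℝ,
          (∀ s y i, w s y i = u s y i + muof ν κ * grad (fun z => Φ (ρ s z)) y i) →
        ∀ t ∈ Ioo 0 T,
          (∫ x in unitBox d, ρ t x * (∑ i, w t x i ^ 2) ^ (1 + δ)) ≤ C := by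
  have hμ : 0 < muof ν κ := muof_pos hκ hνκ
  have hν : 0 < ν := hκ.trans hνκ
  refine ⟨muof ν κ / (512 * ν * γ), by positivity, 1 / γ, by positivity, ?_⟩
  intro δ hδ hδbar ε hε hεf T hT ρ0 u0
  set w0 := effectiveVelocity ε γ ν κ ρ0 u0 with hw0
  refine ⟨2 * (1 + δ) * ((∫ x in unitBox d, ρ0 x * energyDensity δ (w0 x))
    + energyProduction ε ν κ δ * ((γ - 1) * totalEnergy γ ρ0 w0) * T), ?_⟩
  intro P Φ hP hΦ ρ u hsol hρ0 hu0 w hw t ht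
  obtain rfl : ρ 0 = ρ0 := funext hρ0
  obtain rfl : u 0 = u0 := funext hu0
  obtain rfl : w = fun s y i => u s y i + muof ν κ * grad (fun z => Φ (ρ s z)) y i :=
    funext fun s => funext₂ (hw s)
  have h := hsol.isEffectiveSol hκ hνκ hT hP hΦ
  rw [hw0, ← h.effective_eq (left_mem_Icc.2 hT.le)]
  exact h.integral_mul_sum_sq_rpow_le hd hκ hνκ hγ hδ ((le_div_iff₀ (by positivity)).1 hδbar.le)
    hε ((lt_div_iff₀ (by positivity)).1 hεf).le (Ioo_subset_Icc_self ht)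

theorem statement16 (ν κ γ : ℝ) (hκ : 0 < κ) (hνκ : κ < ν) (hγ : 1 < γ) :
    ∃ δbar : ℝ, 0 < δbar ∧ ∃ εf : ℝ, 0 < εf ∧
      ∀ δ : ℝ, 0 < δ → δ < δbar →
      ∀ ε : ℝ, 0 < ε → ε < εf →
      ∀ T : ℝ, 0 < T →
      ∀ (ρ0 : (Fin 2 → ℝ) → ℝ) (u0 : (Fin 2 → ℝ) → (Fin 2 → ℝ)),
        ContDiff ℝ (⊤ : ℕ∞) ρ0 → ContDiff ℝ (⊤ : ℕ∞) u0 →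
        SpacePeriodic ρ0 → SpacePeriodic u0 → (∀ x, 0 < ρ0 x) →
      ∃ C : ℝ,
        ∀ P Φ : ℝ → ℝ, IsPeps ε γ ν κ P → IsPhieps ε γ Φ →
        ∀ (ρ : ℝ → (Fin 2 → ℝ) → ℝ) (u : ℝ → (Fin 2 → ℝ) → (Fin 2 → ℝ)),
          IsQNSSol 2 ε γ ν κ T P ρ u → (∀ x, ρ 0 x = ρ0 x) → (∀ x, u 0 x = u0 x) →
        ∀ w : ℝ → (Fin 2 → ℝ) → (Fin 2 → ℝ),
          (∀ s y i, w s y i = u s y i + muof ν κ * grad (fun z => Φ (ρ s z)) y i) →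
        ∀ t ∈ Set.Ioo 0 T,
          (∫ x in unitBox 2, ρ t x * (∑ i, w t x i ^ 2) ^ (1 + δ)) ≤ C := by
  obtain ⟨δbar, hδbar, εf, hεf, h⟩ := statement16_general (d := 2) (by norm_num) ν κ γ hκ hνκ hγ
  exact ⟨δbar, hδbar, εf, hεf, fun δ hδ hδ' ε hε hε' T hT ρ0 u0 _ _ _ _ _ =>
    h δ hδ.le hδ' ε hε hε' T hT ρ0 u0⟩

end
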